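/- Let d ∈ {2,3} and let A_d := (0,1) if d = 2 and A_d := (0, 1/5] if d = 3. For every α there exists a constant C_{α,d} > 0 such that the following holds for all ε > 0. Let h ∈ L^∞(𝕋^d) ∩ L^{(d+2)/d}(𝕋^d) be a probability density, let Ū ∈ C¹(𝕋^d) have zero mean and be a weak solution of ε² Δ Ū = 1 − h (i.e. ε² ∫ ∇Ū·∇φ dx = −∫ (1−h)φ dx for all smooth φ), and let Û ∈ C²(𝕋^d) satisfy ε² Δ Û = e^{Ū+Û} − 1 pointwise. Then: (a) for α ∈ (0,1), ‖Û‖_{C^{1,α}(𝕋^d)} ≤ C_{α,d} exp( C_{α,d} ε^{−2} (1 + ‖h‖_{L^{(d+2)/d}(𝕋^d)}) ); and (b) for α ∈ A_d, the second derivatives of Û are α-Hölder continuous and ‖Û‖_{C^{2,α}(𝕋^d)} ≤ C_{α,d} exp( exp( C_{α,d} ε^{−2} (1 + ‖h‖_{L^{(d+2)/d}(𝕋^d)}) ) ). -/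

import Mathlib

open MeasureTheory Real Set
open scoped ENNReal

noncomputable section

/-- The fundamental domain `[0,1)^d` of the flat torus `𝕋^d = ℝ^d/ℤ^d`. -/
def Tcube (d : ℕ) : Set (Fin d → ℝ) := Set.univ.pi fun _ => Set.Ico (0:ℝ) 1

/-- The Haar (Lebesgue) probability measure on the torus `𝕋^d`, realised as Lebesgue
measure restricted to the fundamental domain `[0,1)^d`. -/
def torusMeasure (d : ℕ) : Measure (Fin d → ℝ) := volume.restrict (Tcube d)

/-- The Euclidean norm on `ℝ^d`. -/
def euclNorm {d : ℕ} (v : Fin d → ℝ) : ℝ := Real.sqrt (∑ i, (v i) ^ 2)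

/-- The lattice vector in `ℝ^d` associated to `k ∈ ℤ^d`. -/
def latVec {d : ℕ} (k : Fin d → ℤ) : Fin d → ℝ := fun i => (k i : ℝ)

/-- `ℤ^d`-periodicity of a function on `ℝ^d`; such functions are exactly the functions
on the torus `𝕋^d`. -/
def ZPeriodic {d : ℕ} {α : Type*} (f : (Fin d → ℝ) → α) : Prop :=
  ∀ (x : Fin d → ℝ) (k : Fin d → ℤ), f (x + latVec k) = f x

/-- The quotient (flat) metric on the torus `𝕋^d`, expressed on representatives in `ℝ^d`. -/
def tdist {d : ℕ} (x y : Fin d → ℝ) : ℝ := ⨅ k : Fin d → ℤ, euclNorm (x - y + latVec k)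

/-- The gradient of a scalar function on `ℝ^d`, as an `ℝ^d`-valued function. -/
def grad {d : ℕ} (U : (Fin d → ℝ) → ℝ) (x : Fin d → ℝ) : Fin d → ℝ :=
  fun i => fderiv ℝ U x (Pi.single i 1)

/-- The Laplacian: the sum of the second partial derivatives. -/
def lap {d : ℕ} (U : (Fin d → ℝ) → ℝ) (x : Fin d → ℝ) : ℝ :=
  ∑ i, fderiv ℝ (fun y => fderiv ℝ U y (Pi.single i 1)) x (Pi.single i 1)

/-- The Hessian matrix of second partial derivatives. -/
def hess {d : ℕ} (U : (Fin d → ℝ) → ℝ) (x : Fin d → ℝ) : Fin d → Fin d → ℝ :=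
  fun i j => fderiv ℝ (fun y => fderiv ℝ U y (Pi.single j 1)) x (Pi.single i 1)

/-- Frobenius (Euclidean) norm of a `d × d` matrix. -/
def frobNorm {d : ℕ} (M : Fin d → Fin d → ℝ) : ℝ := Real.sqrt (∑ i, ∑ j, (M i j) ^ 2)

/-- Euclidean dot product on `ℝ^d`. -/
def dotP {d : ℕ} (v w : Fin d → ℝ) : ℝ := ∑ i, v i * w i

/-- `HolderBnd α u K` expresses that the Hölder norm `‖u‖_{C^{0,α}(𝕋^d)}`, i.e. the sup
norm plus the `α`-Hölder seminorm with respect to the torus metric, is at most `K`. -/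
def HolderBnd {d : ℕ} (α : ℝ) (u : (Fin d → ℝ) → ℝ) (K : ℝ) : Prop :=
  ∃ A B : ℝ, 0 ≤ A ∧ 0 ≤ B ∧ A + B ≤ K ∧ (∀ x, |u x| ≤ A) ∧
    ∀ x y, |u x - u y| ≤ B * tdist x y ^ α

/-- Hölder norm bound for an `ℝ^d`-valued function, with the Euclidean norm on values. -/
def HolderBndVec {d : ℕ} (α : ℝ) (G : (Fin d → ℝ) → Fin d → ℝ) (K : ℝ) : Prop :=
  ∃ A B : ℝ, 0 ≤ A ∧ 0 ≤ B ∧ A + B ≤ K ∧ (∀ x, euclNorm (G x) ≤ A) ∧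
    ∀ x y, euclNorm (G x - G y) ≤ B * tdist x y ^ α

/-- Hölder norm bound for a matrix-valued function. -/
def HolderBndMat {d : ℕ} (α : ℝ) (M : (Fin d → ℝ) → Fin d → Fin d → ℝ) (K : ℝ) : Prop :=
  ∃ A B : ℝ, 0 ≤ A ∧ 0 ≤ B ∧ A + B ≤ K ∧ (∀ x, frobNorm (M x) ≤ A) ∧
    ∀ x y, frobNorm (M x - M y) ≤ B * tdist x y ^ α

/-- `C1Bnd α u K` expresses `‖u‖_{C^{1,α}(𝕋^d)} ≤ K` (the `C^{0,α}` norm of `u` plus the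
`C^{0,α}` norm of its gradient is at most `K`). -/
def C1Bnd {d : ℕ} (α : ℝ) (u : (Fin d → ℝ) → ℝ) (K : ℝ) : Prop :=
  ∃ K₀ K₁ : ℝ, 0 ≤ K₀ ∧ 0 ≤ K₁ ∧ K₀ + K₁ ≤ K ∧
    HolderBnd α u K₀ ∧ HolderBndVec α (grad u) K₁

/-- `C2Bnd α u K` expresses that the second derivatives of `u` are `α`-Hölder continuous
and `‖u‖_{C^{2,α}(𝕋^d)} ≤ K`. -/
def C2Bnd {d : ℕ} (α : ℝ) (u : (Fin d → ℝ) → ℝ) (K : ℝ) : Prop :=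
  ∃ K₀ K₁ K₂ : ℝ, 0 ≤ K₀ ∧ 0 ≤ K₁ ∧ 0 ≤ K₂ ∧ K₀ + K₁ + K₂ ≤ K ∧
    HolderBnd α u K₀ ∧ HolderBndVec α (grad u) K₁ ∧ HolderBndMat α (hess u) K₂

/-- A coupling of two measures: a measure on the product whose marginals are `μ` and `ν`. -/
def IsCoupling {X : Type*} [MeasurableSpace X] (cpl : Measure (X × X)) (μ ν : Measure X) : Prop :=
  cpl.map Prod.fst = μ ∧ cpl.map Prod.snd = ν

/-- `W_q^q`: the `q`-th power of the Wasserstein distance of order `q` on the torus,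
defined as the infimum over couplings of the integral of the `q`-th power of the torus
distance. -/
def WassPow {d : ℕ} (q : ℝ) (μ ν : Measure (Fin d → ℝ)) : ℝ :=
  sInf { c | ∃ cpl : Measure ((Fin d → ℝ) × (Fin d → ℝ)), IsProbabilityMeasure cpl ∧
    IsCoupling cpl μ ν ∧ c = ∫ z, tdist z.1 z.2 ^ q ∂cpl }

/-- The Wasserstein distance of order `p` on the torus. -/
def Wass {d : ℕ} (p : ℝ) (μ ν : Measure (Fin d → ℝ)) : ℝ :=
  sInf { c | ∃ cpl : Measure ((Fin d → ℝ) × (Fin d → ℝ)), IsProbabilityMeasure cpl ∧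
    IsCoupling cpl μ ν ∧ c = (∫ z, tdist z.1 z.2 ^ p ∂cpl) ^ (1/p) }

/-- The measure `h dx` on the torus associated to a density `h`. -/
def densMeasure {d : ℕ} (h : (Fin d → ℝ) → ℝ) : Measure (Fin d → ℝ) :=
  (torusMeasure d).withDensity fun x => ENNReal.ofReal (h x)

/-- The `L^p(𝕋^d)` norm (as a real number). -/
def LpNorm {d : ℕ} (p : ℝ≥0∞) (u : (Fin d → ℝ) → ℝ) : ℝ :=
  (eLpNorm u p (torusMeasure d)).toReal

/-- `U` is a weak solution of `ε² Δ U = g` on the torus: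
`ε² ∫ ∇U·∇φ dx = −∫ g φ dx` for every smooth (periodic) test function `φ`. -/
def IsWeakPoisson {d : ℕ} (ε : ℝ) (U g : (Fin d → ℝ) → ℝ) : Prop :=
  ∀ φ : (Fin d → ℝ) → ℝ, ContDiff ℝ (⊤ : ℕ∞) φ → ZPeriodic φ →
    ε ^ 2 * ∫ x, dotP (grad U x) (grad φ x) ∂(torusMeasure d) =
      - ∫ x, g x * φ x ∂(torusMeasure d)

end
noncomputable section

/-- The rescaled mollifier `χ_r(x) = r^{-d} χ(x/r)` on `ℝ^d`. -/
def scaledMollifier {d : ℕ} (χ : (Fin d → ℝ) → ℝ) (r : ℝ) (x : Fin d → ℝ) : ℝ :=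
  (r ^ d)⁻¹ * χ (fun i => x i / r)

/-- The `ℤ^d`-periodisation of a function on `ℝ^d`, giving a function on the torus. -/
def periodised {d : ℕ} (g : (Fin d → ℝ) → ℝ) (x : Fin d → ℝ) : ℝ :=
  ∑' k : Fin d → ℤ, g (x + latVec k)

/-- The measure `χ_r ∗ μ` on the torus: the measure with density
`x ↦ ∫ χ_r(x − y) dμ(y)` with respect to the Haar measure (with `χ_r` periodised). -/
def mollifyMeasure {d : ℕ} (χ : (Fin d → ℝ) → ℝ) (r : ℝ) (μ : Measure (Fin d → ℝ)) :
    Measure (Fin d → ℝ) :=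
  (torusMeasure d).withDensity fun x =>
    ENNReal.ofReal (∫ y, periodised (scaledMollifier χ r) (x - y) ∂μ)

/-- A Borel probability measure on the torus `𝕋^d`, realised as a probability measure on
`ℝ^d` carried by the fundamental domain. -/
def IsTorusProb {d : ℕ} (μ : Measure (Fin d → ℝ)) : Prop :=
  IsProbabilityMeasure μ ∧ μ (Tcube d)ᶜ = 0

/-- The set `A_d` of allowed Hölder exponents: `(0,1)` if `d = 2`, `(0,1/5]` if `d = 3`. -/
def Aset (d : ℕ) : Set ℝ := if d = 2 then Set.Ioo 0 1 else Set.Ioc 0 (1/5)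

end

/-!
A function `v` on the torus is compared with its averages `v_s` at scale `s` against a radial
probability kernel `ρ`. If `∇ψ = -z ρ`, then `d/ds v_s` is `s⁻¹` times the average of `v` against
`Δψ`, so a bound `K s^α` on the averages against `Δψ` and `Δ∂_kψ` for `s ≤ 1` can be integrated in
`s`: it gives `|v_1 - v| ≤ K / α`, and, splitting the range of scales at `|x - y|`, the `α`-Hölder
estimate for `v`. Comparing a maximum of `v` with `v_1`, which dominates a fixed multiple of the
mean of `v`, also bounds `sup |v|` once `v` vanishes somewhere.

When `Δv = g` weakly, moving the Laplacian onto the kernel makes these averages `s²` times averages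
of `g`, which are `O(s^{2 - d/q} ‖g‖_{L^q})`. For `Ū` this gives a `C^{0,α}` bound linear in
`ε⁻² (1 + ‖h‖_q)` whenever `α ≤ 2 - d/q`. The maximum principle gives `|Û| ≤ sup |Ū|`, hence an
exponential bound on `ΔÛ`; the same Hölder estimate applied to `∇Û` gives `C^{1,α}`, after which
`ΔÛ` is itself `α`-Hölder, and applied to the second derivatives it gives `C^{2,α}`.
-/

/-- The partial derivative `∂_k f` on `ℝ^d`, as a function; `grad`, `hess` and `lap` are made of
these by unfolding. -/
noncomputable def partialDeriv {d : ℕ} (k : Fin d) (f : (Fin d → ℝ) → ℝ) (x : Fin d → ℝ) : ℝ :=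
  fderiv ℝ f x (Pi.single k 1)

/-- A kernel is a test function on `ℝ^d`, that is, an element of `C_c^∞(ℝ^d)`. -/
structure IsKernel {d : ℕ} (φ : (Fin d → ℝ) → ℝ) : Prop where
  contDiff : ContDiff ℝ (⊤ : ℕ∞) φ
  hasCompactSupport : HasCompactSupport φ

/-- The average of `f` against the kernel `φ` at scale `s`, which for `s > 0` is the integral of
`f` against the rescaled kernel `w ↦ s^{-d} φ((w - x) / s)`. -/
noncomputable def kernelAvg {d : ℕ} (φ : (Fin d → ℝ) → ℝ) (s : ℝ) (f : (Fin d → ℝ) → ℝ)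
    (x : Fin d → ℝ) : ℝ :=
  ∫ z, φ z * f (x + s • z)

section PartialDerivatives

variable {d : ℕ} {f φ : (Fin d → ℝ) → ℝ}

lemma contDiff_partialDeriv {m n : WithTop ℕ∞} (hf : ContDiff ℝ n f) (hmn : m + 1 ≤ n)
    (k : Fin d) : ContDiff ℝ m (partialDeriv k f) :=
  (hf.fderiv_right hmn).clm_apply contDiff_const

lemma continuous_partialDeriv (hf : ContDiff ℝ 1 f) (k : Fin d) : Continuous (partialDeriv k f) :=
  (contDiff_partialDeriv (m := 0) hf (by norm_num) k).continuous

lemma fderiv_eq_sum_partialDeriv (x v : Fin d → ℝ) :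
    fderiv ℝ f x v = ∑ k, v k * partialDeriv k f x := by
  conv_lhs => rw [pi_eq_sum_univ' v]
  simp only [map_sum, map_smul, smul_eq_mul, partialDeriv]

lemma partialDeriv_comm (hf : ContDiff ℝ 2 f) (i j : Fin d) :
    partialDeriv i (partialDeriv j f) = partialDeriv j (partialDeriv i f) := by
  ext x
  have hdiff : DifferentiableAt ℝ (fderiv ℝ f) x :=
    (hf.fderiv_right (m := 1) (by norm_num)).differentiable one_ne_zero x
  have hsecond (i j : Fin d) : partialDeriv i (partialDeriv j f) x
      = fderiv ℝ (fderiv ℝ f) x (Pi.single i 1) (Pi.single j 1) := by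
    change fderiv ℝ (fun y => fderiv ℝ f y (Pi.single j 1)) x (Pi.single i 1) = _
    simp [fderiv_clm_apply hdiff (differentiableAt_const _)]
  rw [hsecond, hsecond]
  exact hf.contDiffAt.isSymmSndFDerivAt (by simp) _ _

lemma partialDeriv_sum {ι : Type*} {s : Finset ι} {g : ι → (Fin d → ℝ) → ℝ}
    (hg : ∀ i ∈ s, Differentiable ℝ (g i)) (k : Fin d) :
    partialDeriv k (fun x => ∑ i ∈ s, g i x) = fun x => ∑ i ∈ s, partialDeriv k (g i) x := by
  ext x
  simp [partialDeriv, fderiv_fun_sum fun i hi => hg i hi x]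

lemma lap_partialDeriv (hf : ContDiff ℝ 3 f) (k : Fin d) :
    lap (partialDeriv k f) = partialDeriv k (lap f) := by
  have hdiff (i : Fin d) : Differentiable ℝ (partialDeriv i (partialDeriv i f)) :=
    (contDiff_partialDeriv (m := 1) (contDiff_partialDeriv (m := 2) hf (by norm_num) i)
      (by norm_num) i).differentiable one_ne_zero
  have hcomm (i : Fin d) : partialDeriv i (partialDeriv i (partialDeriv k f))
      = partialDeriv k (partialDeriv i (partialDeriv i f)) := by
    rw [partialDeriv_comm (hf.of_le (by norm_num)) i k,
      partialDeriv_comm (contDiff_partialDeriv hf (by norm_num) i) i k]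
  calc lap (partialDeriv k f)
      = fun x => ∑ i, partialDeriv i (partialDeriv i (partialDeriv k f)) x := rfl
    _ = partialDeriv k fun x => ∑ i, partialDeriv i (partialDeriv i f) x := by
        simp only [hcomm, partialDeriv_sum fun i _ => hdiff i]

lemma integral_partialDeriv_mul (hf : ContDiff ℝ 1 f) (hφ : ContDiff ℝ 1 φ)
    (hφc : HasCompactSupport φ) (k : Fin d) :
    ∫ x, partialDeriv k φ x * f x = -∫ x, φ x * partialDeriv k f x := by
  have hsupp : HasCompactSupport (partialDeriv k φ) := hφc.fderiv_apply ℝ _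
  refine neg_eq_iff_eq_neg.mp (Eq.symm ?_)
  apply integral_mul_fderiv_eq_neg_fderiv_mul_of_integrable
  · exact ((continuous_partialDeriv hφ k).mul hf.continuous).integrable_of_hasCompactSupport
      hsupp.mul_right
  · exact (hφ.continuous.mul (continuous_partialDeriv hf k)).integrable_of_hasCompactSupport
      hφc.mul_right
  · exact (hφ.continuous.mul hf.continuous).integrable_of_hasCompactSupport hφc.mul_right
  · exact fun x _ => hφ.differentiable one_ne_zero x
  · exact fun x _ => hf.differentiable one_ne_zero x

lemma abs_sub_le_of_abs_partialDeriv_le {M : ℝ} (hf : Differentiable ℝ f)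
    (hM : ∀ k x, |partialDeriv k f x| ≤ M) (x y : Fin d → ℝ) :
    |f x - f y| ≤ d * M * ‖x - y‖ := by
  have hbound (z : Fin d → ℝ) : ‖fderiv ℝ f z‖ ≤ d * M := by
    refine ContinuousLinearMap.opNorm_le_bound' _ ?_ fun v _ => ?_
    · rcases d.eq_zero_or_pos with rfl | hd
      · simp
      · exact mul_nonneg d.cast_nonneg ((abs_nonneg _).trans (hM ⟨0, hd⟩ z))
    · calc ‖fderiv ℝ f z v‖ = |∑ k, v k * partialDeriv k f z| := by
            rw [fderiv_eq_sum_partialDeriv, Real.norm_eq_abs]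
        _ ≤ ∑ k, |v k * partialDeriv k f z| := Finset.abs_sum_le_sum_abs _ _
        _ ≤ ∑ _k : Fin d, ‖v‖ * M := by
            gcongr with k
            rw [abs_mul]
            exact mul_le_mul (norm_le_pi_norm v k) (hM k z) (abs_nonneg _) (norm_nonneg _)
        _ = d * M * ‖v‖ := by simp; ring
  exact convex_univ.norm_image_sub_le_of_norm_fderiv_le (fun z _ => hf z) (fun z _ => hbound z)
    (mem_univ y) (mem_univ x)

end PartialDerivatives

namespace IsKernel

variable {d : ℕ} {φ : (Fin d → ℝ) → ℝ}

lemma continuous (hφ : IsKernel φ) : Continuous φ := hφ.contDiff.continuous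

lemma integrable_mul {f : (Fin d → ℝ) → ℝ} (hφ : IsKernel φ) (hf : Continuous f) :
    Integrable fun z => φ z * f z :=
  (hφ.continuous.mul hf).integrable_of_hasCompactSupport hφ.hasCompactSupport.mul_right

lemma integrable (hφ : IsKernel φ) : Integrable φ :=
  hφ.continuous.integrable_of_hasCompactSupport hφ.hasCompactSupport

lemma partialDeriv (hφ : IsKernel φ) (k : Fin d) : IsKernel (partialDeriv k φ) where
  contDiff := contDiff_partialDeriv hφ.contDiff (by simp) k
  hasCompactSupport := hφ.hasCompactSupport.fderiv_apply ℝ _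

lemma sum {ι : Type*} [Fintype ι] {ψ : ι → (Fin d → ℝ) → ℝ} (hψ : ∀ i, IsKernel (ψ i)) :
    IsKernel fun z => ∑ i, ψ i z where
  contDiff := ContDiff.sum fun i _ => (hψ i).contDiff
  hasCompactSupport := by
    refine HasCompactSupport.intro (isCompact_iUnion fun i => (hψ i).hasCompactSupport)
      fun z hz => Finset.sum_eq_zero fun i _ => image_eq_zero_of_notMem_tsupport fun hi => hz ?_
    exact mem_iUnion.mpr ⟨i, hi⟩

lemma lap (hφ : IsKernel φ) : IsKernel (lap φ) :=
  sum fun i => (hφ.partialDeriv i).partialDeriv i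

lemma comp_affine (hφ : IsKernel φ) {r : ℝ} (hr : r ≠ 0) (x : Fin d → ℝ) :
    IsKernel fun w => φ (r • (w - x)) where
  contDiff := hφ.contDiff.comp (by fun_prop)
  hasCompactSupport :=
    hφ.hasCompactSupport.comp_homeomorph
      ((Homeomorph.subRight x).trans (Homeomorph.smulOfNeZero r hr))

lemma integral_partialDeriv (hφ : IsKernel φ) (k : Fin d) :
    ∫ z, _root_.partialDeriv k φ z = 0 := by
  have h := integral_partialDeriv_mul (f := fun _ => 1) contDiff_const
    (hφ.contDiff.of_le (by exact_mod_cast le_top)) hφ.hasCompactSupport k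
  simpa [_root_.partialDeriv] using h

end IsKernel

section KernelAverages

variable {d : ℕ} {φ f : (Fin d → ℝ) → ℝ}

lemma kernelAvg_zero_left (hφ : ∫ z, φ z = 1) (x : Fin d → ℝ) : kernelAvg φ 0 f x = f x := by
  simp [kernelAvg, integral_mul_const, hφ]

lemma kernelAvg_eq_integral {s : ℝ} (hs : 0 < s) (x : Fin d → ℝ) :
    kernelAvg φ s f x = (s ^ d)⁻¹ * ∫ w, φ (s⁻¹ • (w - x)) * f w := by
  have hscale := Measure.integral_comp_smul_of_nonneg volume
    (fun y => φ (s⁻¹ • y) * f (x + y)) s (hR := hs.le)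
  simp only [inv_smul_smul₀ hs.ne', Module.finrank_fin_fun, smul_eq_mul] at hscale
  have hshift := integral_add_right_eq_self (μ := volume)
    (fun w => φ (s⁻¹ • (w - x)) * f w) x
  simp only [add_sub_cancel_right] at hshift
  rw [← hshift]
  simpa only [kernelAvg, add_comm x] using hscale

lemma continuous_kernelAvg (hφ : IsKernel φ) (hf : Continuous f) :
    Continuous fun p : ℝ × (Fin d → ℝ) => kernelAvg φ p.1 f p.2 := by
  have hset (p : ℝ × (Fin d → ℝ)) :
      kernelAvg φ p.1 f p.2 = ∫ z in tsupport φ, φ z * f (p.2 + p.1 • z) :=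
    (setIntegral_eq_integral_of_forall_compl_eq_zero fun z hz => by
      rw [image_eq_zero_of_notMem_tsupport hz, zero_mul]).symm
  simp only [hset]
  refine continuous_parametric_integral_of_continuous ?_ hφ.hasCompactSupport
  have := hφ.continuous
  fun_prop

lemma abs_kernelAvg_le (hφ : IsKernel φ) {M : ℝ} (hM : ∀ x, |f x| ≤ M) (s : ℝ)
    (x : Fin d → ℝ) : |kernelAvg φ s f x| ≤ (∫ z, |φ z|) * M := by
  rw [← integral_mul_const, ← Real.norm_eq_abs]
  refine norm_integral_le_of_norm_le (hφ.integrable.abs.mul_const M) (ae_of_all _ fun z => ?_)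
  rw [Real.norm_eq_abs, abs_mul]
  gcongr
  exact hM _

lemma abs_kernelAvg_le_of_holder (hφ : IsKernel φ) (hφ0 : ∫ z, φ z = 0) (hf : Continuous f)
    {α H : ℝ} (hα : 0 ≤ α) (hH : ∀ x y, |f x - f y| ≤ H * ‖x - y‖ ^ α) {s : ℝ} (hs : 0 ≤ s)
    (x : Fin d → ℝ) :
    |kernelAvg φ s f x| ≤ (∫ z, |φ z| * ‖z‖ ^ α) * H * s ^ α := by
  have hcenter : kernelAvg φ s f x = ∫ z, φ z * (f (x + s • z) - f x) := by
    simp only [mul_sub]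
    rw [integral_sub (hφ.integrable_mul (by fun_prop)) (hφ.integrable.mul_const _),
      integral_mul_const, hφ0, zero_mul, sub_zero, kernelAvg]
  have hint : Integrable fun z => |φ z| * ‖z‖ ^ α :=
    (hφ.continuous.abs.mul (continuous_norm.rpow_const fun _ => Or.inr hα)
      ).integrable_of_hasCompactSupport hφ.hasCompactSupport.abs.mul_right
  rw [hcenter, ← integral_mul_const, ← integral_mul_const, ← Real.norm_eq_abs]
  refine norm_integral_le_of_norm_le ((hint.mul_const _).mul_const _) (ae_of_all _ fun z => ?_)
  calc ‖φ z * (f (x + s • z) - f x)‖ = |φ z| * |f (x + s • z) - f x| := by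
        rw [Real.norm_eq_abs, abs_mul]
    _ ≤ |φ z| * (H * ‖x + s • z - x‖ ^ α) := by gcongr; exact hH _ _
    _ = |φ z| * ‖z‖ ^ α * H * s ^ α := by
        rw [add_sub_cancel_left, norm_smul, Real.norm_of_nonneg hs,
          Real.mul_rpow hs (norm_nonneg z)]
        ring

lemma kernelAvg_partialDeriv_left (hφ : IsKernel φ) (hf : ContDiff ℝ 1 f) (k : Fin d) (s : ℝ)
    (x : Fin d → ℝ) :
    kernelAvg (partialDeriv k φ) s f x = -s * kernelAvg φ s (partialDeriv k f) x := by
  have hchain (z : Fin d → ℝ) :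
      partialDeriv k (fun z => f (x + s • z)) z = s * partialDeriv k f (x + s • z) := by
    have hinner : HasFDerivAt (fun z : Fin d → ℝ => x + s • z)
        (s • ContinuousLinearMap.id ℝ (Fin d → ℝ)) z := by
      simpa using ((hasFDerivAt_id (𝕜 := ℝ) z).const_smul s).const_add x
    have houter := (hf.differentiable one_ne_zero (x + s • z)).hasFDerivAt
    change fderiv ℝ (f ∘ fun z => x + s • z) z _ = _
    simp [partialDeriv, (houter.comp z hinner).fderiv]
  simp only [kernelAvg]
  rw [integral_partialDeriv_mul (f := fun z => f (x + s • z)) (by fun_prop)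
    (hφ.contDiff.of_le (by simp))
    hφ.hasCompactSupport]
  simp only [hchain, ← integral_const_mul, ← integral_neg]
  congr with z
  ring

/-- The rescaled and reflected kernel `s^{-d} φ(-y / s)`, for which `kernelAvg` is a
convolution. -/
noncomputable def convKernel (φ : (Fin d → ℝ) → ℝ) (s : ℝ) (y : Fin d → ℝ) : ℝ :=
  s ^ (-d : ℤ) * φ (-s⁻¹ • y)

lemma kernelAvg_eq_convolution {s : ℝ} (hs : 0 < s) (x : Fin d → ℝ) :
    kernelAvg φ s f x
      = convolution f (convKernel φ s) (ContinuousLinearMap.mul ℝ ℝ) volume x := by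
  rw [kernelAvg_eq_integral hs, ← integral_const_mul]
  simp only [convolution, convKernel, ContinuousLinearMap.mul_apply', zpow_neg, zpow_natCast]
  congr with w
  rw [neg_smul, ← smul_neg, neg_sub]
  ring

/-- The kernel `D` for which `-D / s` averages the derivative of `kernelAvg φ` at scale `s` in the
direction `(σ, ξ)`. Its `σ`-part is the divergence of `z ↦ φ(z) z`. -/
noncomputable def derivKernel (φ : (Fin d → ℝ) → ℝ) (σ : ℝ) (ξ z : Fin d → ℝ) : ℝ :=
  σ * (d * φ z + fderiv ℝ φ z z) + fderiv ℝ φ z ξ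

lemma contDiffOn_convKernel (hφ : ContDiff ℝ 1 φ) :
    ContDiffOn ℝ 1 (fun p : ℝ × (Fin d → ℝ) => convKernel φ p.1 p.2) (Ioi 0 ×ˢ univ) := by
  intro p hp
  have hp0 : p.1 ≠ 0 := (mem_Ioi.mp hp.1).ne'
  refine ContDiffAt.contDiffWithinAt ?_
  unfold convKernel
  simp only [zpow_neg, zpow_natCast]
  refine ((contDiffAt_fst.pow d).inv (pow_ne_zero _ hp0)).mul (hφ.contDiffAt.comp p ?_)
  exact (contDiffAt_fst.inv hp0).neg.smul contDiffAt_snd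

lemma fderiv_convKernel (hφ : ContDiff ℝ 1 φ) {s : ℝ} (hs : 0 < s) (y : Fin d → ℝ) (σ : ℝ)
    (ξ : Fin d → ℝ) :
    fderiv ℝ (fun p : ℝ × (Fin d → ℝ) => convKernel φ p.1 p.2) (s, y) (σ, ξ)
      = -s⁻¹ * convKernel (derivKernel φ σ ξ) s y := by
  have hdiff := ((contDiffOn_convKernel hφ).differentiableOn one_ne_zero).differentiableAt
    (x := (s, y)) ((isOpen_Ioi.prod isOpen_univ).mem_nhds ⟨hs, mem_univ y⟩)
  have hs_line : HasDerivAt (fun t : ℝ => s + t * σ) σ 0 := by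
    simpa using ((hasDerivAt_id (0 : ℝ)).mul_const σ).const_add s
  have hy_line : HasDerivAt (fun t : ℝ => y + t • ξ) ξ 0 := by
    simpa using ((hasDerivAt_id (0 : ℝ)).smul_const ξ).const_add y
  have hpow : HasDerivAt (fun t : ℝ => (s + t * σ) ^ (-d : ℤ))
      ((-d : ℤ) * s ^ (-d - 1 : ℤ) * σ) 0 := by
    exact ((hasDerivAt_zpow (-d : ℤ) _ (Or.inl (by simpa using hs.ne'))).comp 0 hs_line).congr_deriv
      (by simp)
  have harg : HasDerivAt (fun t : ℝ => -(s + t * σ)⁻¹ • (y + t • ξ))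
      (-s⁻¹ • ξ + (σ / s ^ 2) • y) 0 := by
    exact ((hs_line.inv (by simpa using hs.ne')).neg.smul hy_line).congr_deriv (by simp [neg_div])
  have hφ_line := (hφ.differentiable one_ne_zero (-s⁻¹ • y)).hasFDerivAt.comp_hasDerivAt_of_eq 0
    harg (by simp)
  have hline := hpow.mul hφ_line
  have hcomp := (hdiff.hasFDerivAt.comp_hasDerivAt_of_eq (0 : ℝ)
    (hs_line.prodMk hy_line) (by simp)).unique hline
  rw [hcomp]
  simp only [convKernel, derivKernel, Function.comp_apply, zero_mul, add_zero, zero_smul,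
    map_add, map_smul, smul_eq_mul, zpow_sub_one₀ hs.ne']
  push_cast
  field_simp
  ring

lemma exists_closedBall_of_smul_mem_tsupport (hφ : HasCompactSupport φ) (T : ℝ) :
    ∃ R, ∀ s ∈ Ioo 0 T, ∀ y : Fin d → ℝ, -s⁻¹ • y ∈ tsupport φ → y ∈ Metric.closedBall 0 R := by
  obtain ⟨R, hR⟩ := hφ.isCompact.isBounded.subset_closedBall 0
  refine ⟨T * R, fun s hs y hy => ?_⟩
  have hR0 : 0 ≤ R := dist_nonneg.trans (hR hy)
  have hy' : s⁻¹ * ‖y‖ ≤ R := by simpa [norm_smul, abs_of_pos hs.1] using hR hy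
  calc dist y 0 = ‖y‖ := dist_zero_right y
    _ ≤ s * R := (inv_mul_le_iff₀ hs.1).mp hy'
    _ ≤ T * R := by gcongr; exact hs.2.le

lemma hasFDerivAt_kernelAvg (hφ : IsKernel φ) (hf : Continuous f) {s : ℝ} (hs : 0 < s)
    (x : Fin d → ℝ) :
    ∃ A : ℝ × (Fin d → ℝ) →L[ℝ] ℝ,
      HasFDerivAt (fun p : ℝ × (Fin d → ℝ) => kernelAvg φ p.1 f p.2) A (s, x) ∧
        ∀ σ ξ, A (σ, ξ) = -s⁻¹ * kernelAvg (derivKernel φ σ ξ) s f x := by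
  have hφ1 : ContDiff ℝ 1 φ := hφ.contDiff.of_le (by simp)
  have hsmooth := contDiffOn_convKernel hφ1
  obtain ⟨R, hR⟩ := exists_closedBall_of_smul_mem_tsupport hφ.hasCompactSupport (s + 1)
  have hsT : s ∈ Ioo 0 (s + 1) := ⟨hs, lt_add_one s⟩
  have hcompact := isCompact_closedBall (0 : Fin d → ℝ) R
  have hloc := hf.locallyIntegrable (μ := volume)
  have hconv := hasFDerivAt_convolution_right_with_param (g := convKernel φ)
    (ContinuousLinearMap.mul ℝ ℝ) isOpen_Ioo hcompact
    (fun p y hp hy => by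
      rw [convKernel, image_eq_zero_of_notMem_tsupport (mt (hR p hp y) hy), mul_zero])
    hloc (hsmooth.mono (prod_mono Ioo_subset_Ioi_self subset_rfl)) (s, x) hsT
  have hcont : Continuous fun y => fderiv ℝ ↿(convKernel φ) (s, y) :=
    (hsmooth.continuousOn_fderiv_of_isOpen (isOpen_Ioi.prod isOpen_univ) le_rfl).comp_continuous
      (by fun_prop) fun y => ⟨hs, mem_univ y⟩
  have hsupp : HasCompactSupport fun y => fderiv ℝ ↿(convKernel φ) (s, y) := by
    refine HasCompactSupport.intro hcompact fun y hy => ContinuousLinearMap.ext fun ⟨σ, ξ⟩ => ?_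
    have hy' := mt (hR s hsT y) hy
    refine (fderiv_convKernel hφ1 hs y σ ξ).trans ?_
    rw [convKernel, derivKernel, image_eq_zero_of_notMem_tsupport hy',
      fderiv_of_notMem_tsupport ℝ hy']
    simp
  refine ⟨_, hconv.congr_of_eventuallyEq ?_, fun σ ξ => ?_⟩
  · filter_upwards [(isOpen_Ioi.preimage continuous_fst).mem_nhds (show (s, x).1 ∈ Ioi 0 from hs)]
      with p hp using kernelAvg_eq_convolution hp p.2
  · rw [convolution_precompR_apply _ hloc hsupp hcont, kernelAvg_eq_convolution hs]
    have hval (y : Fin d → ℝ) := fderiv_convKernel hφ1 hs y σ ξ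
    change convolution f (fun y => fderiv ℝ (fun p : ℝ × (Fin d → ℝ) => convKernel φ p.1 p.2)
      (s, y) (σ, ξ)) _ _ x = _
    simp only [hval]
    exact congrFun (convolution_smul (𝕜 := ℝ)) x

lemma hasDerivAt_kernelAvg (hφ : IsKernel φ) (hf : Continuous f) {s : ℝ} (hs : 0 < s)
    (x : Fin d → ℝ) :
    HasDerivAt (fun s => kernelAvg φ s f x)
      (-s⁻¹ * kernelAvg (fun z => d * φ z + fderiv ℝ φ z z) s f x) s := by
  obtain ⟨A, hA, hval⟩ := hasFDerivAt_kernelAvg hφ hf hs x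
  have h := hA.comp_hasDerivAt s ((hasDerivAt_id s).prodMk (hasDerivAt_const s x))
  have hkernel : derivKernel φ 1 0 = fun z => d * φ z + fderiv ℝ φ z z := by
    ext z
    simp [derivKernel]
  exact h.congr_deriv (by rw [hval, hkernel])

lemma differentiable_kernelAvg (hφ : IsKernel φ) (hf : Continuous f) {s : ℝ} (hs : 0 < s) :
    Differentiable ℝ (kernelAvg φ s f) := fun x => by
  obtain ⟨A, hA, -⟩ := hasFDerivAt_kernelAvg hφ hf hs x
  exact (hA.comp x ((hasFDerivAt_const s x).prodMk (hasFDerivAt_id x))).differentiableAt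

lemma partialDeriv_kernelAvg (hφ : IsKernel φ) (hf : Continuous f) {s : ℝ} (hs : 0 < s)
    (k : Fin d) (x : Fin d → ℝ) :
    partialDeriv k (kernelAvg φ s f) x = -s⁻¹ * kernelAvg (partialDeriv k φ) s f x := by
  obtain ⟨A, hA, hval⟩ := hasFDerivAt_kernelAvg hφ hf hs x
  have h := hA.comp x ((hasFDerivAt_const s x).prodMk (hasFDerivAt_id (𝕜 := ℝ) x))
  change fderiv ℝ ((fun p : ℝ × (Fin d → ℝ) => kernelAvg φ p.1 f p.2) ∘ fun y => (s, y)) x _ = _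
  have hkernel : derivKernel φ 0 (Pi.single k 1) = partialDeriv k φ := by
    ext z
    simp [derivKernel, partialDeriv]
  rw [h.fderiv, ← hkernel, ← hval]
  simp

end KernelAverages

section AveragingKernel

/-- A smooth radial bump of compact support, equal to `1` on the unit cube, from which the kernels
below are built. -/
noncomputable def radialBump (d : ℕ) (z : Fin d → ℝ) : ℝ :=
  Real.smoothTransition (d + 1 - ∑ i, z i ^ 2)

/-- The probability kernel `ρ` whose scalings play the role of the heat semigroup. -/
noncomputable def averagingKernel (d : ℕ) (z : Fin d → ℝ) : ℝ :=
  (∫ w, radialBump d w)⁻¹ * radialBump d z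

/-- The radial kernel `ψ` with `∇ψ = -z ρ`, where `ρ` is the `averagingKernel`. -/
noncomputable def potentialKernel (d : ℕ) (z : Fin d → ℝ) : ℝ :=
  (∫ w, radialBump d w)⁻¹ / 2 *
    ∫ t in (0 : ℝ)..(d + 1 - ∑ i, z i ^ 2), Real.smoothTransition t

variable {d : ℕ} {f : (Fin d → ℝ) → ℝ}

lemma norm_sq_le_sum_sq (z : Fin d → ℝ) : ‖z‖ ^ 2 ≤ ∑ i, z i ^ 2 := by
  have hnorm : ‖z‖ ≤ √(∑ i, z i ^ 2) := by
    refine (pi_norm_le_iff_of_nonneg (by positivity)).mpr fun i => Real.abs_le_sqrt ?_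
    exact Finset.single_le_sum (f := fun i => z i ^ 2) (fun i _ => sq_nonneg _) (Finset.mem_univ i)
  exact (Real.le_sqrt (norm_nonneg z) (by positivity)).mp hnorm

lemma hasCompactSupport_of_sum_sq {g : (Fin d → ℝ) → ℝ} {r : ℝ}
    (hg : ∀ z, r ≤ ∑ i, z i ^ 2 → g z = 0) : HasCompactSupport g := by
  refine HasCompactSupport.intro (isCompact_closedBall (0 : Fin d → ℝ) √r) fun z hz => hg z ?_
  have hz' : √r < ‖z‖ := by simpa using hz
  exact ((Real.sqrt_lt' ((Real.sqrt_nonneg r).trans_lt hz')).mp hz').le.trans (norm_sq_le_sum_sq z)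

lemma isKernel_radialBump (d : ℕ) : IsKernel (radialBump d) where
  contDiff := Real.smoothTransition.contDiff.comp (by fun_prop)
  hasCompactSupport := hasCompactSupport_of_sum_sq (r := d + 1) fun z hz =>
    Real.smoothTransition.zero_of_nonpos (by linarith)

lemma radialBump_eq_one {z : Fin d → ℝ} (hz : z ∈ Tcube d) : radialBump d z = 1 := by
  refine Real.smoothTransition.one_of_one_le ?_
  have hsum : ∑ i, z i ^ 2 ≤ ∑ _i : Fin d, (1 : ℝ) := by
    gcongr with i
    exact pow_le_one₀ (hz i trivial).1 (hz i trivial).2.le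
  simp only [Finset.sum_const, Finset.card_univ, Fintype.card_fin, nsmul_eq_mul, mul_one] at hsum
  linarith

lemma radialBump_nonneg (z : Fin d → ℝ) : 0 ≤ radialBump d z := Real.smoothTransition.nonneg _

lemma integral_radialBump_pos (d : ℕ) : 0 < ∫ z, radialBump d z := by
  refine (isKernel_radialBump d).continuous.integral_pos_of_hasCompactSupport_nonneg_nonzero
    (isKernel_radialBump d).hasCompactSupport radialBump_nonneg (x := 0) ?_
  rw [radialBump_eq_one fun i _ => by simp]
  exact one_ne_zero

lemma isKernel_averagingKernel (d : ℕ) : IsKernel (averagingKernel d) where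
  contDiff := contDiff_const.mul (isKernel_radialBump d).contDiff
  hasCompactSupport := (isKernel_radialBump d).hasCompactSupport.mul_left

lemma integral_averagingKernel (d : ℕ) : ∫ z, averagingKernel d z = 1 := by
  simp only [averagingKernel, integral_const_mul]
  exact inv_mul_cancel₀ (integral_radialBump_pos d).ne'

lemma averagingKernel_nonneg (z : Fin d → ℝ) : 0 ≤ averagingKernel d z :=
  mul_nonneg (inv_nonneg.mpr (integral_radialBump_pos d).le) (radialBump_nonneg z)

lemma hasDerivAt_integral_smoothTransition (u : ℝ) :
    HasDerivAt (fun u => ∫ t in (0 : ℝ)..u, Real.smoothTransition t) (Real.smoothTransition u) u :=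
  (Real.smoothTransition.continuous.integral_hasStrictDerivAt 0 u).hasDerivAt

lemma contDiff_integral_smoothTransition :
    ContDiff ℝ (⊤ : ℕ∞) fun u => ∫ t in (0 : ℝ)..u, Real.smoothTransition t := by
  refine contDiff_infty_iff_deriv.mpr
    ⟨fun u => (hasDerivAt_integral_smoothTransition u).differentiableAt, ?_⟩
  rw [funext fun u => (hasDerivAt_integral_smoothTransition u).deriv]
  exact Real.smoothTransition.contDiff

lemma isKernel_potentialKernel (d : ℕ) : IsKernel (potentialKernel d) where
  contDiff := contDiff_const.mul (contDiff_integral_smoothTransition.comp (by fun_prop))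
  hasCompactSupport := hasCompactSupport_of_sum_sq (r := d + 1) fun z hz => by
    rw [potentialKernel, intervalIntegral.integral_zero_ae, mul_zero]
    filter_upwards with t ht
    rw [uIoc_of_ge (by linarith)] at ht
    exact Real.smoothTransition.zero_of_nonpos ht.2

lemma hasFDerivAt_sum_sq (z : Fin d → ℝ) :
    HasFDerivAt (fun z : Fin d → ℝ => ∑ i, z i ^ 2)
      (∑ i, (2 * z i) • ContinuousLinearMap.proj (R := ℝ) (φ := fun _ : Fin d => ℝ) i) z := by
  refine HasFDerivAt.fun_sum fun i _ => ?_
  simpa using (hasFDerivAt_apply (𝕜 := ℝ) i z).pow 2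

lemma partialDeriv_potentialKernel (k : Fin d) :
    partialDeriv k (potentialKernel d) = fun z => -(z k * averagingKernel d z) := by
  ext z
  have h := ((hasDerivAt_integral_smoothTransition _).comp_hasFDerivAt z
    ((hasFDerivAt_sum_sq z).const_sub (d + 1 : ℝ))).const_mul ((∫ w, radialBump d w)⁻¹ / 2)
  change fderiv ℝ _ z _ = _
  rw [HasFDerivAt.fderiv (f := potentialKernel d) h]
  simp [averagingKernel, radialBump, Pi.single_apply]
  ring

lemma lap_potentialKernel (z : Fin d → ℝ) :
    lap (potentialKernel d) z
      = -(d * averagingKernel d z + fderiv ℝ (averagingKernel d) z z) := by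
  have hdiff : DifferentiableAt ℝ (averagingKernel d) z :=
    (isKernel_averagingKernel d).contDiff.differentiable (by simp) z
  have hterm (k : Fin d) : partialDeriv k (partialDeriv k (potentialKernel d)) z
      = -(averagingKernel d z + z k * partialDeriv k (averagingKernel d) z) := by
    have h := ((hasFDerivAt_apply (𝕜 := ℝ) k z).mul hdiff.hasFDerivAt).neg
    rw [partialDeriv_potentialKernel]
    change fderiv ℝ _ z _ = _
    rw [HasFDerivAt.fderiv (f := fun z => -(z k * averagingKernel d z)) h]
    simp [partialDeriv]
    ring
  calc lap (potentialKernel d) z = ∑ k, partialDeriv k (partialDeriv k (potentialKernel d)) z := rfl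
    _ = _ := by
      simp [hterm, Finset.sum_add_distrib, fderiv_eq_sum_partialDeriv]

lemma hasDerivAt_averagingKernel (hf : Continuous f) {s : ℝ} (hs : 0 < s) (x : Fin d → ℝ) :
    HasDerivAt (fun s => kernelAvg (averagingKernel d) s f x)
      (s⁻¹ * kernelAvg (lap (potentialKernel d)) s f x) s := by
  refine (hasDerivAt_kernelAvg (isKernel_averagingKernel d) hf hs x).congr_deriv ?_
  rw [funext lap_potentialKernel]
  simp only [kernelAvg, neg_mul, integral_neg, mul_neg]

end AveragingKernel

section ScaleInterpolation

lemma abs_sub_le_of_abs_deriv_le {f f' g g' : ℝ → ℝ} {a b : ℝ} (hab : a ≤ b)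
    (hf : ContinuousOn f (Icc a b)) (hg : ContinuousOn g (Icc a b))
    (hf' : ∀ s ∈ Ioo a b, HasDerivAt f (f' s) s) (hg' : ∀ s ∈ Ioo a b, HasDerivAt g (g' s) s)
    (hle : ∀ s ∈ Ioo a b, |f' s| ≤ g' s) : |f b - f a| ≤ g b - g a := by
  have hmono_add : MonotoneOn (g + f) (Icc a b) :=
    monotoneOn_of_hasDerivWithinAt_nonneg (convex_Icc a b) (hg.add hf)
      (fun s hs => by
        rw [interior_Icc] at hs ⊢
        exact ((hg' s hs).add (hf' s hs)).hasDerivWithinAt)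
      fun s hs => by
        rw [interior_Icc] at hs
        linarith [neg_abs_le (f' s), hle s hs]
  have hmono_sub : MonotoneOn (g - f) (Icc a b) :=
    monotoneOn_of_hasDerivWithinAt_nonneg (convex_Icc a b) (hg.sub hf)
      (fun s hs => by
        rw [interior_Icc] at hs ⊢
        exact ((hg' s hs).sub (hf' s hs)).hasDerivWithinAt)
      fun s hs => by
        rw [interior_Icc] at hs
        linarith [le_abs_self (f' s), hle s hs]
  have hadd := hmono_add (left_mem_Icc.mpr hab) (right_mem_Icc.mpr hab) hab
  have hsub := hmono_sub (left_mem_Icc.mpr hab) (right_mem_Icc.mpr hab) hab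
  simp only [Pi.add_apply, Pi.sub_apply] at hadd hsub
  exact abs_le.mpr ⟨by linarith, by linarith⟩

lemma abs_sub_le_of_abs_deriv_le_rpow {f f' : ℝ → ℝ} {β K a b : ℝ} (hβ : β ≠ 0) (hab : a ≤ b)
    (ha : 0 ≤ a) (hβa : 0 < β ∨ 0 < a) (hf : ContinuousOn f (Icc a b))
    (hf' : ∀ s ∈ Ioo a b, HasDerivAt f (f' s) s)
    (hle : ∀ s ∈ Ioo a b, |f' s| ≤ K * s ^ (β - 1)) :
    |f b - f a| ≤ K / β * b ^ β - K / β * a ^ β := by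
  refine abs_sub_le_of_abs_deriv_le (g := fun s => K / β * s ^ β)
    (g' := fun s => K * s ^ (β - 1)) hab hf ?_ hf' (fun s hs => ?_) hle
  · refine continuousOn_const.mul (continuousOn_id.rpow_const fun s hs => ?_)
    exact hβa.symm.imp (fun h => (h.trans_le hs.1).ne') le_of_lt
  · refine ((Real.hasDerivAt_rpow_const (Or.inl (ha.trans_lt hs.1).ne')).const_mul
      (K / β)).congr_deriv ?_
    field_simp

variable {X : Type*} {A D : ℝ → X → ℝ} {α K K' : ℝ}

lemma abs_sub_zero_le_of_scale_deriv (hα : 0 < α)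
    (hA : ∀ x, ContinuousOn (fun s => A s x) (Icc 0 1))
    (hD : ∀ s ∈ Ioo 0 1, ∀ x, HasDerivAt (fun s => A s x) (D s x) s)
    (hDle : ∀ s ∈ Ioo 0 1, ∀ x, |D s x| ≤ K * s ^ (α - 1)) {δ : ℝ} (hδ : δ ∈ Icc 0 1) (x : X) :
    |A δ x - A 0 x| ≤ K / α * δ ^ α := by
  have h := abs_sub_le_of_abs_deriv_le_rpow hα.ne' hδ.1 le_rfl (Or.inl hα)
    ((hA x).mono (Icc_subset_Icc_right hδ.2)) (fun s hs => hD s ⟨hs.1, hs.2.trans_le hδ.2⟩ x)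
    fun s hs => hDle s ⟨hs.1, hs.2.trans_le hδ.2⟩ x
  rwa [Real.zero_rpow hα.ne', mul_zero, sub_zero] at h

variable [PseudoMetricSpace X]

lemma abs_increment_sub_le_of_scale_deriv (hα : α < 1)
    (hA : ∀ x, ContinuousOn (fun s => A s x) (Icc 0 1))
    (hD : ∀ s ∈ Ioo 0 1, ∀ x, HasDerivAt (fun s => A s x) (D s x) s)
    (hDlip : ∀ s ∈ Ioo 0 1, ∀ x y, |D s x - D s y| ≤ K * s ^ (α - 2) * dist x y)
    {δ : ℝ} (hδ : δ ∈ Ioc 0 1) (x y : X) :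
    |(A 1 x - A 1 y) - (A δ x - A δ y)| ≤ K * dist x y / (1 - α) * (δ ^ (α - 1) - 1) := by
  have h := abs_sub_le_of_abs_deriv_le_rpow (f := fun s => A s x - A s y)
    (f' := fun s => D s x - D s y) (K := K * dist x y) (sub_ne_zero.mpr hα.ne) hδ.2 hδ.1.le
    (Or.inr hδ.1) (((hA x).sub (hA y)).mono (Icc_subset_Icc_left hδ.1.le))
    (fun s hs => (hD s ⟨hδ.1.trans hs.1, hs.2⟩ x).sub (hD s ⟨hδ.1.trans hs.1, hs.2⟩ y))
    fun s hs => (hDlip s ⟨hδ.1.trans hs.1, hs.2⟩ x y).trans_eq (by ring_nf)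
  refine h.trans_eq ?_
  rw [Real.one_rpow, ← neg_sub α 1, div_neg]
  ring

/-- The derivative bound `s^{α-1}` is used at scales below `dist x y` and the Lipschitz bound
`s^{α-2}` above it; both integrate to multiples of `dist x y ^ α`. -/
lemma abs_sub_le_of_scale_deriv (hα : α ∈ Ioo 0 1)
    (hA : ∀ x, ContinuousOn (fun s => A s x) (Icc 0 1))
    (hD : ∀ s ∈ Ioo 0 1, ∀ x, HasDerivAt (fun s => A s x) (D s x) s)
    (hDle : ∀ s ∈ Ioo 0 1, ∀ x, |D s x| ≤ K * s ^ (α - 1))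
    (hDlip : ∀ s ∈ Ioo 0 1, ∀ x y, |D s x - D s y| ≤ K * s ^ (α - 2) * dist x y)
    (hlip : ∀ x y, |A 1 x - A 1 y| ≤ K' * dist x y) {x y : X} (hxy : dist x y ∈ Ioc 0 1) :
    |A 0 x - A 0 y| ≤ (2 * (K / α) + K / (1 - α) + K') * dist x y ^ α := by
  set δ := dist x y
  have hfine := abs_sub_zero_le_of_scale_deriv hα.1 hA hD hDle (Ioc_subset_Icc_self hxy)
  have hcoarse := abs_increment_sub_le_of_scale_deriv hα.2 hA hD hDlip hxy x y
  have hpow : δ * δ ^ (α - 1) = δ ^ α := by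
    rw [← Real.rpow_one_add' hxy.1.le (by linarith [hα.1]), add_sub_cancel]
  have hK : 0 ≤ K := by
    have h := (abs_nonneg _).trans (hDle (1 / 2) (by norm_num) x)
    exact nonneg_of_mul_nonneg_left h (by positivity)
  have hK' : 0 ≤ K' := nonneg_of_mul_nonneg_left ((abs_nonneg _).trans (hlip x y)) hxy.1
  have hcoarse' : K * δ / (1 - α) * (δ ^ (α - 1) - 1) ≤ K / (1 - α) * δ ^ α := by
    calc K * δ / (1 - α) * (δ ^ (α - 1) - 1)
        = K / (1 - α) * (δ * δ ^ (α - 1)) - K / (1 - α) * δ := by ring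
      _ ≤ K / (1 - α) * δ ^ α := by
        rw [hpow, sub_le_self_iff]
        exact mul_nonneg (div_nonneg hK (sub_nonneg.mpr hα.2.le)) hxy.1.le
  have hδle : K' * δ ≤ K' * δ ^ α :=
    mul_le_mul_of_nonneg_left (Real.self_le_rpow_of_le_one hxy.1.le hxy.2 hα.2.le) hK'
  calc |A 0 x - A 0 y|
      = |-(A δ x - A 0 x) + (A δ y - A 0 y) + (A 1 x - A 1 y)
          - ((A 1 x - A 1 y) - (A δ x - A δ y))| := by ring_nf
    _ ≤ |A δ x - A 0 x| + |A δ y - A 0 y| + |A 1 x - A 1 y|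
          + |(A 1 x - A 1 y) - (A δ x - A δ y)| := by
        refine (abs_sub _ _).trans (add_le_add_left ((abs_add_three _ _ _).trans_eq ?_) _)
        rw [abs_neg]
    _ ≤ (2 * (K / α) + K / (1 - α) + K') * δ ^ α := by
        linarith [hfine x, hfine y, hlip x y]

end ScaleInterpolation

section Torus

open scoped Pointwise

variable {d : ℕ}

/-- The lattice `ℤ^d` as a subgroup of `ℝ^d`. -/
abbrev intLattice (d : ℕ) : AddSubgroup (Fin d → ℝ) :=
  (Submodule.span ℤ (Set.range (Pi.basisFun ℝ (Fin d)))).toAddSubgroup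

lemma mem_intLattice {v : Fin d → ℝ} : v ∈ intLattice d ↔ ∃ k : Fin d → ℤ, latVec k = v := by
  rw [Submodule.mem_toAddSubgroup, Module.Basis.mem_span_iff_repr_mem]
  simp only [Pi.basisFun_repr, mem_range, algebraMap_int_eq, Int.coe_castRingHom]
  rw [Classical.skolem]
  exact exists_congr fun k => funext_iff.symm

lemma latVec_injective : Function.Injective (latVec : (Fin d → ℤ) → Fin d → ℝ) :=
  fun k l h => funext fun i => by simpa [latVec] using congrFun h i

/-- The identification of `ℤ^d`, as integer vectors, with the lattice in `ℝ^d`. -/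
noncomputable def latVecEquiv (d : ℕ) : (Fin d → ℤ) ≃ intLattice d :=
  Equiv.ofBijective (fun k => ⟨latVec k, mem_intLattice.mpr ⟨k, rfl⟩⟩)
    ⟨fun _ _ h => latVec_injective (congrArg Subtype.val h), fun v =>
      (mem_intLattice.mp v.2).imp fun _ hk => Subtype.ext hk⟩

lemma norm_latVec (k : Fin d → ℤ) : ‖latVec k‖ = ‖k‖ := by
  have hcast (i : Fin d) : ‖(k i : ℝ)‖₊ = ‖k i‖₊ := NNReal.eq (Int.norm_cast_real (k i))
  simp only [Pi.norm_def, latVec, hcast]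

lemma volume_Tcube (d : ℕ) : volume (Tcube d) = 1 := by
  simp [Tcube, volume_pi_pi]

lemma measurableSet_Tcube (d : ℕ) : MeasurableSet (Tcube d) :=
  MeasurableSet.univ_pi fun _ => measurableSet_Ico

lemma norm_le_one_of_mem_Tcube {x : Fin d → ℝ} (hx : x ∈ Tcube d) : ‖x‖ ≤ 1 :=
  (pi_norm_le_iff_of_nonneg zero_le_one).mpr fun i =>
    abs_le.mpr ⟨by linarith [(hx i trivial).1], (hx i trivial).2.le⟩

instance isProbabilityMeasure_torusMeasure (d : ℕ) : IsProbabilityMeasure (torusMeasure d) :=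
  ⟨by simp [torusMeasure, volume_Tcube]⟩

instance countable_intLattice (d : ℕ) : Countable (intLattice d) :=
  (latVecEquiv d).symm.injective.countable

lemma isAddFundamentalDomain_Tcube (d : ℕ) :
    IsAddFundamentalDomain (intLattice d) (Tcube d) volume := by
  have : Tcube d = ZSpan.fundamentalDomain (Pi.basisFun ℝ (Fin d)) := by
    ext x
    simp [Tcube, ZSpan.mem_fundamentalDomain]
  rw [this]
  exact ZSpan.isAddFundamentalDomain' _ _

namespace ZPeriodic

variable {β : Type*} {f g : (Fin d → ℝ) → ℝ}

lemma vadd {F : (Fin d → ℝ) → β} (hF : ZPeriodic F) (v : intLattice d) (x : Fin d → ℝ) :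
    F (v +ᵥ x) = F x := by
  obtain ⟨k, hk⟩ := mem_intLattice.mp v.2
  calc F (v +ᵥ x) = F (x + latVec k) := by rw [hk, add_comm x]; rfl
    _ = F x := hF x k

lemma setLIntegral_add_left {F : (Fin d → ℝ) → ℝ≥0∞} (hF : ZPeriodic F) (y : Fin d → ℝ) :
    ∫⁻ z, F (y + z) ∂(torusMeasure d) = ∫⁻ z, F z ∂(torusMeasure d) :=
  calc ∫⁻ z in Tcube d, F (y + z) = ∫⁻ z in (y +ᵥ Tcube d), F z :=
        (measurePreserving_add_left volume y).setLIntegral_comp_emb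
          (measurableEmbedding_addLeft y) F (Tcube d)
    _ = ∫⁻ z in Tcube d, F z := (((isAddFundamentalDomain_Tcube d).vadd_of_comm y).setLIntegral_eq
          (isAddFundamentalDomain_Tcube d) F hF.vadd)

lemma setIntegral_add_left (hf : ZPeriodic f) (y : Fin d → ℝ) :
    ∫ z, f (y + z) ∂(torusMeasure d) = ∫ z, f z ∂(torusMeasure d) :=
  calc ∫ z in Tcube d, f (y + z) = ∫ z in (y +ᵥ Tcube d), f z :=
        ((measurePreserving_add_left volume y).setIntegral_image_emb
          (measurableEmbedding_addLeft y) f (Tcube d)).symm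
    _ = ∫ z in Tcube d, f z := (((isAddFundamentalDomain_Tcube d).vadd_of_comm y).setIntegral_eq
          (isAddFundamentalDomain_Tcube d) hf.vadd)

lemma exists_isMax (hf : ZPeriodic f) (hc : Continuous f) : ∃ x, ∀ y, f y ≤ f x := by
  obtain ⟨x, -, hx⟩ := (isCompact_Icc (a := (0 : Fin d → ℝ)) (b := 1)).exists_isMaxOn
    ⟨0, by simp⟩ hc.continuousOn
  refine ⟨x, fun y => ?_⟩
  let k : Fin d → ℤ := fun i => -⌊y i⌋
  have hk : y + latVec k ∈ Icc (0 : Fin d → ℝ) 1 := by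
    constructor <;> intro i <;>
      simp only [latVec, k, Pi.add_apply, Pi.zero_apply, Pi.one_apply, Int.cast_neg] <;>
      linarith [Int.floor_le (y i), Int.lt_floor_add_one (y i)]
  exact hf y k ▸ hx hk

lemma exists_abs_le (hf : ZPeriodic f) (hc : Continuous f) : ∃ M, ∀ x, |f x| ≤ M := by
  obtain ⟨x, hx⟩ := exists_isMax (f := fun y => |f y|) (fun y k => by simp only [hf y k]) hc.abs
  exact ⟨|f x|, hx⟩

lemma partialDeriv (hf : ZPeriodic f) (k : Fin d) : ZPeriodic (partialDeriv k f) := by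
  intro x m
  have h := fderiv_comp_add_right (𝕜 := ℝ) (f := f) (x := x) (latVec m)
  rw [funext fun y => hf y m] at h
  rw [_root_.partialDeriv, ← h, _root_.partialDeriv]

lemma exists_partialDeriv_eq_zero (hf : ZPeriodic f) (hc : Continuous f) (k : Fin d) :
    ∃ x, _root_.partialDeriv k f x = 0 := by
  obtain ⟨x, hx⟩ := hf.exists_isMax hc
  have hmax : IsLocalMax f x := Filter.Eventually.of_forall hx
  exact ⟨x, by simp [_root_.partialDeriv, hmax.fderiv_eq_zero]⟩

lemma exists_eq_zero_of_integral_eq_zero (hf : ZPeriodic f) (hc : Continuous f)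
    (h0 : ∫ x, f x ∂(torusMeasure d) = 0) : ∃ x, f x = 0 := by
  obtain ⟨M, hM⟩ := hf.exists_abs_le hc
  have hint : Integrable f (torusMeasure d) :=
    .of_bound hc.aestronglyMeasurable M (ae_of_all _ hM)
  have hle : (∃ x, f x ≤ 0) ∧ ∃ x, 0 ≤ f x := by
    simpa only [h0] using And.intro (exists_le_integral hint) (exists_integral_le hint)
  obtain ⟨⟨x, hx⟩, ⟨y, hy⟩⟩ := hle
  exact mem_range_of_exists_le_of_exists_ge hc ⟨x, hx⟩ ⟨y, hy⟩

/-- Averages over all translates by `θ ∈ [0,1)^d`, each of which stays in the ball of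
radius `R + 1`. -/
lemma lintegral_closedBall_le {F : (Fin d → ℝ) → ℝ≥0∞} (hF : ZPeriodic F) (hm : Measurable F)
    (x : Fin d → ℝ) (R : ℝ) :
    ∫⁻ z in Metric.closedBall x R, F z
      ≤ volume (Metric.closedBall (0 : Fin d → ℝ) (R + 1)) * ∫⁻ z, F z ∂(torusMeasure d) := by
  have htranslate {θ : Fin d → ℝ} (hθ : θ ∈ Tcube d) :
      ∫⁻ z in Metric.closedBall x R, F z ≤ ∫⁻ z in Metric.closedBall x (R + 1), F (z + θ) := by
    rw [(measurePreserving_add_right volume θ).setLIntegral_comp_emb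
      (measurableEmbedding_addRight θ)]
    refine lintegral_mono_set fun w hw => ⟨w - θ, ?_, sub_add_cancel w θ⟩
    calc dist (w - θ) x ≤ dist (w - θ) w + dist w x := dist_triangle _ _ _
      _ ≤ 1 + R := by
          gcongr
          · simpa [dist_eq_norm] using norm_le_one_of_mem_Tcube hθ
          · exact hw
      _ = R + 1 := add_comm _ _
  calc ∫⁻ z in Metric.closedBall x R, F z
      = ∫⁻ _θ, (∫⁻ z in Metric.closedBall x R, F z) ∂(torusMeasure d) := by simp
    _ ≤ ∫⁻ θ, (∫⁻ z in Metric.closedBall x (R + 1), F (z + θ)) ∂(torusMeasure d) :=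
        lintegral_mono_ae <|
          ae_restrict_of_forall_mem (measurableSet_Tcube d) fun _ hθ => htranslate hθ
    _ = ∫⁻ z in Metric.closedBall x (R + 1), (∫⁻ θ, F (z + θ) ∂(torusMeasure d)) :=
        lintegral_lintegral_swap
          (hm.comp (measurable_snd.add measurable_fst)).aemeasurable
    _ = volume (Metric.closedBall (0 : Fin d → ℝ) (R + 1)) * ∫⁻ z, F z ∂(torusMeasure d) := by
        simp only [hF.setLIntegral_add_left, setLIntegral_const]
        rw [mul_comm, Measure.addHaar_closedBall_center]

lemma locallyIntegrable (hf : ZPeriodic f) (hm : Measurable f)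
    (hint : Integrable f (torusMeasure d)) : LocallyIntegrable f := fun x => by
  refine ⟨Metric.closedBall x 1, Metric.closedBall_mem_nhds x one_pos,
    hm.aestronglyMeasurable, ?_⟩
  have hper : ZPeriodic fun y => ‖f y‖ₑ := fun y k => by simp only [hf y k]
  exact (hper.lintegral_closedBall_le hm.enorm x 1).trans_lt
    (ENNReal.mul_lt_top measure_closedBall_lt_top hint.2)

end ZPeriodic

lemma exists_finset_translate_notMem {K : Set (Fin d → ℝ)} (hK : Bornology.IsBounded K) (R : ℝ) :
    ∃ S : Finset (Fin d → ℤ), ∀ x ∈ Metric.closedBall (0 : Fin d → ℝ) R, ∀ k ∉ S,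
      x + latVec k ∉ K := by
  obtain ⟨M, hM⟩ := hK.exists_norm_le
  have hfin : (Metric.closedBall (0 : Fin d → ℤ) (M + R)).Finite :=
    (isCompact_closedBall _ _).finite_of_discrete
  refine ⟨hfin.toFinset, fun x hx k hk hmem => hk ?_⟩
  rw [Set.Finite.mem_toFinset, mem_closedBall_zero_iff, ← norm_latVec]
  calc ‖latVec k‖ = ‖x + latVec k - x‖ := by rw [add_sub_cancel_left]
    _ ≤ ‖x + latVec k‖ + ‖x‖ := norm_sub_le _ _
    _ ≤ M + R := add_le_add (hM _ hmem) (mem_closedBall_zero_iff.mp hx)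

section Periodised

variable {f φ : (Fin d → ℝ) → ℝ}

lemma zperiodic_periodised (φ : (Fin d → ℝ) → ℝ) : ZPeriodic (periodised φ) := fun x k => by
  have hadd (l : Fin d → ℤ) : x + latVec k + latVec l = x + latVec (k + l) := by
    ext i
    simp [latVec, add_assoc]
  simp only [periodised, hadd]
  exact (Equiv.addLeft k).tsum_eq fun l => φ (x + latVec l)

/-- The finite set serves the kernel and its derivatives at once. -/
lemma exists_finset_periodised_eq_sum (hφ : HasCompactSupport φ) (R : ℝ) :
    ∃ S : Finset (Fin d → ℤ), ∀ ψ : (Fin d → ℝ) → ℝ, tsupport ψ ⊆ tsupport φ →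
      ∀ x ∈ Metric.closedBall (0 : Fin d → ℝ) R,
        periodised ψ x = ∑ k ∈ S, ψ (x + latVec k) := by
  obtain ⟨S, hS⟩ := exists_finset_translate_notMem hφ.isCompact.isBounded R
  exact ⟨S, fun ψ hψ x hx => tsum_eq_sum fun k hk =>
    image_eq_zero_of_notMem_tsupport fun hmem => hS x hx k hk (hψ hmem)⟩

lemma IsKernel.exists_eventuallyEq_periodised (hφ : IsKernel φ) (x : Fin d → ℝ) :
    ∃ S : Finset (Fin d → ℤ), ∀ ψ : (Fin d → ℝ) → ℝ, tsupport ψ ⊆ tsupport φ →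
      periodised ψ =ᶠ[nhds x] fun y => ∑ k ∈ S, ψ (y + latVec k) := by
  obtain ⟨S, hS⟩ := exists_finset_periodised_eq_sum hφ.hasCompactSupport (‖x‖ + 1)
  have hnhds : Metric.closedBall (0 : Fin d → ℝ) (‖x‖ + 1) ∈ nhds x :=
    Metric.closedBall_mem_nhds_of_mem (by simp)
  exact ⟨S, fun ψ hψ => Filter.eventually_of_mem hnhds (hS ψ hψ)⟩

lemma IsKernel.contDiff_periodised (hφ : IsKernel φ) :
    ContDiff ℝ (⊤ : ℕ∞) (periodised φ) := by
  refine contDiff_iff_contDiffAt.mpr fun x => ?_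
  obtain ⟨S, hS⟩ := hφ.exists_eventuallyEq_periodised x
  refine ContDiffAt.congr_of_eventuallyEq ?_ (hS φ subset_rfl)
  exact ContDiffAt.sum fun k _ => (hφ.contDiff.comp (by fun_prop)).contDiffAt

lemma IsKernel.partialDeriv_periodised (hφ : IsKernel φ) (i : Fin d) :
    _root_.partialDeriv i (periodised φ) = periodised (_root_.partialDeriv i φ) := by
  ext x
  obtain ⟨S, hS⟩ := hφ.exists_eventuallyEq_periodised x
  have hdiff : Differentiable ℝ φ := hφ.contDiff.differentiable (by simp)
  have hsupp : tsupport (_root_.partialDeriv i φ) ⊆ tsupport φ :=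
    tsupport_fderiv_apply_subset ℝ _
  have htranslate (k : Fin d → ℤ) : _root_.partialDeriv i (fun y => φ (y + latVec k))
      = fun y => _root_.partialDeriv i φ (y + latVec k) := by
    ext y
    rw [_root_.partialDeriv, fderiv_comp_add_right, _root_.partialDeriv]
  calc _root_.partialDeriv i (periodised φ) x
      = _root_.partialDeriv i (fun y => ∑ k ∈ S, φ (y + latVec k)) x := by
        rw [_root_.partialDeriv, (hS φ subset_rfl).fderiv_eq, _root_.partialDeriv]
    _ = ∑ k ∈ S, _root_.partialDeriv i φ (x + latVec k) := by
        rw [partialDeriv_sum (g := fun k y => φ (y + latVec k))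
          fun k _ => hdiff.comp (differentiable_id.add_const (latVec k))]
        simp only [htranslate]
    _ = periodised (_root_.partialDeriv i φ) x := (hS _ hsupp).eq_of_nhds.symm

lemma integral_mul_periodised (hf : ZPeriodic f) (hloc : LocallyIntegrable f)
    (hφ : IsKernel φ) :
    ∫ x, f x * periodised φ x ∂(torusMeasure d) = ∫ x, f x * φ x := by
  have hint {ψ : (Fin d → ℝ) → ℝ} (hψ : Continuous ψ) (hψc : HasCompactSupport ψ) :
      Integrable fun x => f x * ψ x :=
    hloc.integrable_smul_right_of_hasCompactSupport hψ hψc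
  obtain ⟨S, hS⟩ := exists_finset_translate_notMem hφ.hasCompactSupport.isCompact.isBounded 1
  have hzero {x : Fin d → ℝ} (hx : x ∈ Tcube d) {k : Fin d → ℤ} (hk : k ∉ S) :
      φ (x + latVec k) = 0 :=
    image_eq_zero_of_notMem_tsupport
      (hS x (mem_closedBall_zero_iff.mpr (norm_le_one_of_mem_Tcube hx)) k hk)
  calc ∫ x, f x * periodised φ x ∂(torusMeasure d)
      = ∫ x in Tcube d, ∑ k ∈ S, f x * φ (x + latVec k) :=
        setIntegral_congr_fun (measurableSet_Tcube d) fun x hx => by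
          simp only [← Finset.mul_sum, periodised, tsum_eq_sum fun _ hk => hzero hx hk]
    _ = ∑ k ∈ S, ∫ x in Tcube d, f x * φ (x + latVec k) :=
        integral_finsetSum _ fun k _ => (hint (by have := hφ.continuous; fun_prop)
          (hφ.hasCompactSupport.comp_homeomorph (Homeomorph.addRight _))).integrableOn
    _ = ∑' k, ∫ x in Tcube d, f x * φ (x + latVec k) :=
        (tsum_eq_sum fun k hk => setIntegral_eq_zero_of_forall_eq_zero fun x hx => by
          rw [hzero hx hk, mul_zero]).symm
    _ = ∑' v : intLattice d, ∫ x in Tcube d, f (v +ᵥ x) * φ (v +ᵥ x) := by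
        rw [← (latVecEquiv d).tsum_eq]
        refine tsum_congr fun k => ?_
        simp only [hf.vadd]
        simp only [latVecEquiv, add_comm _ (latVec k)]
        rfl
    _ = ∫ x, f x * φ x := ((isAddFundamentalDomain_Tcube d).integral_eq_tsum'' _
          (hint hφ.continuous hφ.hasCompactSupport)).symm

end Periodised

end Torus

/-- `‖v‖_∞ ≤ M`, and `v` is `α`-Hölder on `ℝ^d` with constant `M`, both in the sup norm of `ℝ^d`.
For periodic `v` this is, up to constants, a bound on its Hölder norm on the torus. -/
def IsHolderBounded {d : ℕ} (α : ℝ) (v : (Fin d → ℝ) → ℝ) (M : ℝ) : Prop :=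
  (∀ x, |v x| ≤ M) ∧ ∀ x y, |v x - v y| ≤ M * ‖x - y‖ ^ α

/-- The averages of `v` against `Δψ` and `Δ∂_kψ` at scale `s`, where `ψ` is the `potentialKernel`,
are at most `K s^α`: the averaged form of `Δv` has Hölder regularity `α - 2`. -/
def HasLapDecay {d : ℕ} (α : ℝ) (v : (Fin d → ℝ) → ℝ) (K : ℝ) : Prop :=
  ∀ s ∈ Ioc (0 : ℝ) 1, ∀ x, |kernelAvg (lap (potentialKernel d)) s v x| ≤ K * s ^ α ∧
    ∀ k, |kernelAvg (lap (partialDeriv k (potentialKernel d))) s v x| ≤ K * s ^ α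

section HolderEstimate

variable {d : ℕ} {α K : ℝ} {v : (Fin d → ℝ) → ℝ}

namespace IsHolderBounded

lemma nonneg {M : ℝ} (h : IsHolderBounded α v M) : 0 ≤ M := (abs_nonneg _).trans (h.1 0)

lemma mono {M M' : ℝ} (h : IsHolderBounded α v M) (hM : M ≤ M') : IsHolderBounded α v M' :=
  ⟨fun x => (h.1 x).trans hM, fun x y => (h.2 x y).trans (by gcongr)⟩

lemma of_norm_sub_le_one {H M : ℝ} (hα : 0 < α) (hH0 : 0 ≤ H) (hM : ∀ x, |v x| ≤ M)
    (hH : ∀ x y, ‖x - y‖ ∈ Ioc (0 : ℝ) 1 → |v x - v y| ≤ H * ‖x - y‖ ^ α) :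
    IsHolderBounded α v (H + 2 * M) := by
  have hM0 : 0 ≤ M := (abs_nonneg _).trans (hM 0)
  refine ⟨fun x => (hM x).trans (by linarith), fun x y => ?_⟩
  obtain hxy | hpos := (norm_nonneg (x - y)).eq_or_lt
  · rw [sub_eq_zero.mp (norm_eq_zero.mp hxy.symm)]
    simp [Real.zero_rpow hα.ne']
  obtain hle | hlt := le_or_gt ‖x - y‖ 1
  · exact (hH x y ⟨hpos, hle⟩).trans (by gcongr; linarith)
  · calc |v x - v y| ≤ |v x| + |v y| := abs_sub _ _
      _ ≤ (H + 2 * M) * 1 := by linarith [hM x, hM y]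
      _ ≤ (H + 2 * M) * ‖x - y‖ ^ α := by
          gcongr
          exact Real.one_le_rpow hlt.le hα.le

end IsHolderBounded

lemma HasLapDecay.nonneg (h : HasLapDecay α v K) : 0 ≤ K := by
  simpa using (abs_nonneg _).trans (h 1 ⟨one_pos, le_rfl⟩ 0).1

/-- A Doeblin contraction: at a maximum point of `v` the average at scale one dominates a fixed
fraction of the torus average. -/
lemma ZPeriodic.sub_integral_le (hv : ZPeriodic v) (hc : Continuous v)
    (hK : ∀ x, |kernelAvg (averagingKernel d) 1 v x - v x| ≤ K) (x : Fin d → ℝ) :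
    v x - ∫ y, v y ∂(torusMeasure d) ≤ (∫ z, radialBump d z) * K := by
  obtain ⟨a, ha⟩ := hv.exists_isMax hc
  obtain ⟨M, hM⟩ := hv.exists_abs_le hc
  have hinttor : Integrable (fun z => v (a + z)) (torusMeasure d) :=
    .of_bound (by fun_prop) M (ae_of_all _ fun z => hM _)
  have hint : Integrable fun z => averagingKernel d z * (v a - v (a + z)) :=
    (isKernel_averagingKernel d).integrable_mul (by fun_prop)
  have htorus : (∫ z, radialBump d z)⁻¹ * (v a - ∫ y, v y ∂(torusMeasure d)) ≤ K :=
    calc (∫ z, radialBump d z)⁻¹ * (v a - ∫ y, v y ∂(torusMeasure d))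
        = (∫ z, radialBump d z)⁻¹ * ∫ z, (v a - v (a + z)) ∂(torusMeasure d) := by
          rw [integral_sub (integrable_const _) hinttor, hv.setIntegral_add_left]
          simp
      _ = ∫ z in Tcube d, averagingKernel d z * (v a - v (a + z)) := by
          rw [← integral_const_mul]
          refine setIntegral_congr_fun (measurableSet_Tcube d) fun z hz => ?_
          simp only [averagingKernel, radialBump_eq_one hz, mul_one]
      _ ≤ ∫ z, averagingKernel d z * (v a - v (a + z)) :=
          setIntegral_le_integral hint (ae_of_all _ fun z =>
            mul_nonneg (averagingKernel_nonneg z) (sub_nonneg.mpr (ha _)))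
      _ = v a - kernelAvg (averagingKernel d) 1 v a := by
          simp only [mul_sub, kernelAvg, one_smul]
          rw [integral_sub ((isKernel_averagingKernel d).integrable.mul_const _)
            ((isKernel_averagingKernel d).integrable_mul (by fun_prop)), integral_mul_const,
            integral_averagingKernel, one_mul]
      _ ≤ K := by linarith [(abs_le.mp (hK a)).1]
  rw [inv_mul_le_iff₀ (integral_radialBump_pos d)] at htorus
  linarith [ha x]

lemma ZPeriodic.abs_le_of_abs_kernelAvg_sub_le (hv : ZPeriodic v) (hc : Continuous v)
    (hzero : ∃ x, v x = 0) (hK : ∀ x, |kernelAvg (averagingKernel d) 1 v x - v x| ≤ K)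
    (x : Fin d → ℝ) : |v x| ≤ 2 * (∫ z, radialBump d z) * K := by
  have hneg : ZPeriodic fun y => -v y := fun y k => by simp only [hv y k]
  have hnegK (y : Fin d → ℝ) :
      |kernelAvg (averagingKernel d) 1 (fun y => -v y) y - -v y| ≤ K := by
    convert hK y using 1
    rw [abs_sub_comm]
    simp only [kernelAvg, mul_neg, integral_neg]
    congr 1
    ring
  obtain ⟨x₀, hx₀⟩ := hzero
  have hupper := hv.sub_integral_le hc hK
  have hlower := hneg.sub_integral_le hc.neg hnegK
  simp only [integral_neg] at hlower
  rw [abs_le]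
  constructor <;> linarith [hupper x, hupper x₀, hlower x, hlower x₀]

lemma continuousOn_kernelAvg_averagingKernel (hc : Continuous v) (x : Fin d → ℝ) :
    ContinuousOn (fun s => kernelAvg (averagingKernel d) s v x) (Icc 0 1) :=
  ((continuous_kernelAvg (isKernel_averagingKernel d) hc).comp (.prodMk_left x)).continuousOn

namespace HasLapDecay

lemma abs_deriv_scale_le (h : HasLapDecay α v K) {s : ℝ} (hs : s ∈ Ioo 0 1) (x : Fin d → ℝ) :
    |s⁻¹ * kernelAvg (lap (potentialKernel d)) s v x| ≤ K * s ^ (α - 1) := by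
  rw [abs_mul, abs_of_pos (inv_pos.mpr hs.1), Real.rpow_sub_one hs.1.ne', inv_mul_eq_div,
    ← mul_div_assoc]
  exact div_le_div_of_nonneg_right (h s ⟨hs.1, hs.2.le⟩ x).1 hs.1.le

lemma abs_le (h : HasLapDecay α v K) (hα : 0 < α) (hv : ZPeriodic v) (hc : Continuous v)
    (hzero : ∃ x, v x = 0) (x : Fin d → ℝ) : |v x| ≤ 2 * (∫ z, radialBump d z) * (K / α) := by
  refine hv.abs_le_of_abs_kernelAvg_sub_le hc hzero (fun x => ?_) x
  simpa [kernelAvg_zero_left (integral_averagingKernel d)] using abs_sub_zero_le_of_scale_deriv hα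
    (continuousOn_kernelAvg_averagingKernel hc) (fun s hs => hasDerivAt_averagingKernel hc hs.1)
    (fun s hs => h.abs_deriv_scale_le hs) (right_mem_Icc.mpr zero_le_one) x

lemma abs_deriv_scale_sub_le (h : HasLapDecay α v K) (hc : Continuous v) {s : ℝ}
    (hs : s ∈ Ioo 0 1) (x y : Fin d → ℝ) :
    |s⁻¹ * kernelAvg (lap (potentialKernel d)) s v x
      - s⁻¹ * kernelAvg (lap (potentialKernel d)) s v y|
        ≤ d * K * s ^ (α - 2) * dist x y := by
  have hker := isKernel_potentialKernel d
  have hgrad (k : Fin d) (z : Fin d → ℝ) :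
      |partialDeriv k (kernelAvg (lap (potentialKernel d)) s v) z| ≤ K * s ^ (α - 1) := by
    rw [partialDeriv_kernelAvg hker.lap hc hs.1,
      ← lap_partialDeriv (contDiff_infty.mp hker.contDiff 3), abs_mul, abs_neg,
      abs_of_pos (inv_pos.mpr hs.1), Real.rpow_sub_one hs.1.ne', inv_mul_eq_div, ← mul_div_assoc]
    exact div_le_div_of_nonneg_right ((h s ⟨hs.1, hs.2.le⟩ z).2 k) hs.1.le
  calc |s⁻¹ * kernelAvg (lap (potentialKernel d)) s v x
          - s⁻¹ * kernelAvg (lap (potentialKernel d)) s v y|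
      = s⁻¹ * |kernelAvg (lap (potentialKernel d)) s v x
          - kernelAvg (lap (potentialKernel d)) s v y| := by
        rw [← mul_sub, abs_mul, abs_of_pos (inv_pos.mpr hs.1)]
    _ ≤ s⁻¹ * (d * (K * s ^ (α - 1)) * ‖x - y‖) := by
        have hs0 := hs.1
        gcongr
        exact abs_sub_le_of_abs_partialDeriv_le (differentiable_kernelAvg hker.lap hc hs.1) hgrad
          x y
    _ = d * K * s ^ (α - 2) * dist x y := by
        rw [show α - 2 = α - 1 - 1 by ring, Real.rpow_sub_one hs.1.ne' (α - 1), dist_eq_norm]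
        ring

end HasLapDecay

lemma abs_kernelAvg_averagingKernel_one_sub_le {M : ℝ} (hc : Continuous v) (hM : ∀ x, |v x| ≤ M)
    (x y : Fin d → ℝ) :
    |kernelAvg (averagingKernel d) 1 v x - kernelAvg (averagingKernel d) 1 v y|
      ≤ d * ((∑ k, ∫ z, |partialDeriv k (averagingKernel d) z|) * M) * dist x y := by
  have hker := isKernel_averagingKernel d
  have hM0 : 0 ≤ M := (abs_nonneg _).trans (hM 0)
  refine abs_sub_le_of_abs_partialDeriv_le (differentiable_kernelAvg hker hc one_pos)
    (fun k z => ?_) x y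
  calc |partialDeriv k (kernelAvg (averagingKernel d) 1 v) z|
      = |kernelAvg (partialDeriv k (averagingKernel d)) 1 v z| := by
        rw [partialDeriv_kernelAvg hker hc one_pos]
        simp
    _ ≤ (∫ z, |partialDeriv k (averagingKernel d) z|) * M :=
        abs_kernelAvg_le (hker.partialDeriv k) hM 1 z
    _ ≤ (∑ k, ∫ z, |partialDeriv k (averagingKernel d) z|) * M := by
        gcongr
        exact Finset.single_le_sum (f := fun k => ∫ z, |partialDeriv k (averagingKernel d) z|)
          (fun k _ => by positivity) (Finset.mem_univ k)

theorem exists_isHolderBounded_of_hasLapDecay (d : ℕ) (hα : α ∈ Ioo 0 1) :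
    ∃ C, 0 ≤ C ∧ ∀ (v : (Fin d → ℝ) → ℝ) (K : ℝ), ZPeriodic v → Continuous v →
      (∃ x, v x = 0) → HasLapDecay α v K → IsHolderBounded α v (C * K) := by
  obtain ⟨hα0, hα1⟩ := hα
  have hα1' : 0 < 1 - α := sub_pos.mpr hα1
  set I := ∫ z, radialBump d z
  have hI : 0 < I := integral_radialBump_pos d
  set J := ∑ k : Fin d, ∫ z, |partialDeriv k (averagingKernel d) z|
  have hJ : 0 ≤ J := Finset.sum_nonneg fun k _ => by positivity
  refine ⟨2 * ((d + 1) / α) + (d + 1) / (1 - α) + (d * J + 2) * (2 * I / α), by positivity,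
    fun v K hv hc hzero h => ?_⟩
  have hK : 0 ≤ K := h.nonneg
  have hsup := h.abs_le hα0 hv hc hzero
  have hlocal (x y : Fin d → ℝ) (hxy : ‖x - y‖ ∈ Ioc (0 : ℝ) 1) :
      |v x - v y| ≤ (2 * ((d + 1) * K / α) + (d + 1) * K / (1 - α)
        + d * (J * (2 * I * (K / α)))) * ‖x - y‖ ^ α := by
    simpa only [kernelAvg_zero_left (integral_averagingKernel d), dist_eq_norm] using
      abs_sub_le_of_scale_deriv ⟨hα0, hα1⟩
      (continuousOn_kernelAvg_averagingKernel hc) (fun s hs => hasDerivAt_averagingKernel hc hs.1)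
      (fun s hs x => (h.abs_deriv_scale_le hs x).trans (by
        have := Real.rpow_nonneg hs.1.le (α - 1)
        gcongr
        nlinarith [(d.cast_nonneg : (0 : ℝ) ≤ d)]))
      (fun s hs x y => (h.abs_deriv_scale_sub_le hc hs x y).trans (by
        have := Real.rpow_nonneg hs.1.le (α - 2)
        gcongr
        linarith))
      (abs_kernelAvg_averagingKernel_one_sub_le hc hsup) (by rwa [dist_eq_norm])
  refine (IsHolderBounded.of_norm_sub_le_one hα0 (by positivity) hsup hlocal).mono (le_of_eq ?_)
  ring

end HolderEstimate

section WeakLaplacian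

variable {d : ℕ} {ε s : ℝ} {u v f g φ : (Fin d → ℝ) → ℝ}

/-- `Δv = g` in the sense of distributions on `ℝ^d`. -/
def HasWeakLaplacian {d : ℕ} (v g : (Fin d → ℝ) → ℝ) : Prop :=
  ∀ φ : (Fin d → ℝ) → ℝ, IsKernel φ → ∫ x, v x * lap φ x = ∫ x, g x * φ x

lemma partialDeriv_comp_affine (hφ : Differentiable ℝ φ) (r : ℝ) (x : Fin d → ℝ) (k : Fin d) :
    partialDeriv k (fun w => φ (r • (w - x)))
      = fun w => r * partialDeriv k φ (r • (w - x)) := by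
  ext w
  have hinner : HasFDerivAt (fun w : Fin d → ℝ => r • (w - x))
      (r • ContinuousLinearMap.id ℝ (Fin d → ℝ)) w :=
    ((hasFDerivAt_id w).sub_const x).const_smul r
  change fderiv ℝ (φ ∘ fun w => r • (w - x)) w _ = _
  rw [((hφ _).hasFDerivAt.comp w hinner).fderiv]
  simp [partialDeriv]

lemma IsKernel.lap_comp_affine (hφ : IsKernel φ) (r : ℝ) (x w : Fin d → ℝ) :
    _root_.lap (fun w => φ (r • (w - x))) w = r ^ 2 * _root_.lap φ (r • (w - x)) := by
  have hdiff {ψ : (Fin d → ℝ) → ℝ} (hψ : IsKernel ψ) : Differentiable ℝ ψ :=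
    hψ.contDiff.differentiable (by simp)
  have hterm (i : Fin d) :
      _root_.partialDeriv i (_root_.partialDeriv i fun w => φ (r • (w - x))) w
        = r ^ 2 * _root_.partialDeriv i (_root_.partialDeriv i φ) (r • (w - x)) := by
    have hscaled : Differentiable ℝ fun w => _root_.partialDeriv i φ (r • (w - x)) :=
      (hdiff (hφ.partialDeriv i)).comp (by fun_prop)
    rw [partialDeriv_comp_affine (hdiff hφ), _root_.partialDeriv, fderiv_const_mul (hscaled w)]
    have h := congrFun (partialDeriv_comp_affine (hdiff (hφ.partialDeriv i)) r x i) w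
    rw [_root_.partialDeriv] at h
    rw [smul_apply, h, smul_eq_mul]
    ring
  calc _root_.lap (fun w => φ (r • (w - x))) w
      = ∑ i, _root_.partialDeriv i (_root_.partialDeriv i fun w => φ (r • (w - x))) w := rfl
    _ = r ^ 2 * ∑ i, _root_.partialDeriv i (_root_.partialDeriv i φ) (r • (w - x)) := by
        simp only [hterm, Finset.mul_sum]
    _ = r ^ 2 * _root_.lap φ (r • (w - x)) := rfl

lemma HasWeakLaplacian.kernelAvg_lap (h : HasWeakLaplacian v g) (hφ : IsKernel φ) (hs : 0 < s)
    (x : Fin d → ℝ) : kernelAvg (lap φ) s v x = s ^ 2 * kernelAvg φ s g x := by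
  have htest := h _ (hφ.comp_affine (inv_ne_zero hs.ne') x)
  simp only [hφ.lap_comp_affine, mul_left_comm _ (s⁻¹ ^ 2), integral_const_mul] at htest
  rw [kernelAvg_eq_integral hs, kernelAvg_eq_integral hs]
  simp only [mul_comm (φ _), ← htest, mul_comm (lap φ _)]
  field_simp

lemma hasWeakLaplacian_lap (hu : ContDiff ℝ 2 u) : HasWeakLaplacian u (lap u) := by
  intro φ hφ
  have hu1 (i : Fin d) : ContDiff ℝ 1 (partialDeriv i u) := contDiff_partialDeriv hu (by norm_num) i
  have hC1 {ψ : (Fin d → ℝ) → ℝ} (hψ : IsKernel ψ) : ContDiff ℝ 1 ψ :=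
    contDiff_infty.mp hψ.contDiff 1
  have hparts (i : Fin d) : ∫ x, partialDeriv i (partialDeriv i φ) x * u x
      = ∫ x, φ x * partialDeriv i (partialDeriv i u) x := by
    rw [integral_partialDeriv_mul (hu.of_le (by norm_num)) (hC1 (hφ.partialDeriv i))
      (hφ.partialDeriv i).hasCompactSupport, integral_partialDeriv_mul (hu1 i) (hC1 hφ)
      hφ.hasCompactSupport, neg_neg]
  calc ∫ x, u x * lap φ x = ∫ x, ∑ i, partialDeriv i (partialDeriv i φ) x * u x := by
        simp only [← Finset.sum_mul, mul_comm (u _)]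
        rfl
    _ = ∑ i, ∫ x, φ x * partialDeriv i (partialDeriv i u) x := by
        rw [integral_finsetSum _ fun i _ =>
          ((hφ.partialDeriv i).partialDeriv i).integrable_mul hu.continuous]
        simp only [hparts]
    _ = ∫ x, lap u x * φ x := by
        rw [← integral_finsetSum _ fun i _ => hφ.integrable_mul
          (continuous_partialDeriv (hu1 i) i)]
        simp only [mul_comm (φ _), ← Finset.sum_mul]
        rfl

lemma integral_dotP_grad_periodised (hv : ContDiff ℝ 1 v) (hvp : ZPeriodic v) (hφ : IsKernel φ) :
    ∫ x, dotP (grad v x) (grad (periodised φ) x) ∂(torusMeasure d) = -∫ x, v x * lap φ x := by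
  have hcont (i : Fin d) : Continuous (partialDeriv i v) := continuous_partialDeriv hv i
  have hint (i : Fin d) : Integrable
      (fun x => partialDeriv i v x * periodised (partialDeriv i φ) x) (torusMeasure d) := by
    have hprod : Continuous fun x => partialDeriv i v x * periodised (partialDeriv i φ) x :=
      (hcont i).mul (hφ.partialDeriv i).contDiff_periodised.continuous
    obtain ⟨M, hM⟩ := ZPeriodic.exists_abs_le
      (fun x k => by simp only [hvp.partialDeriv i x k, zperiodic_periodised _ x k]) hprod
    exact .of_bound hprod.aestronglyMeasurable M (ae_of_all _ hM)
  have hparts (i : Fin d) : ∫ x, partialDeriv i v x * partialDeriv i φ x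
      = -∫ x, partialDeriv i (partialDeriv i φ) x * v x := by
    rw [integral_partialDeriv_mul hv (contDiff_infty.mp (hφ.partialDeriv i).contDiff 1)
      (hφ.partialDeriv i).hasCompactSupport, neg_neg]
    simp only [mul_comm]
  calc ∫ x, dotP (grad v x) (grad (periodised φ) x) ∂(torusMeasure d)
      = ∫ x, ∑ i, partialDeriv i v x * periodised (partialDeriv i φ) x ∂(torusMeasure d) := by
        simp only [← hφ.partialDeriv_periodised]
        rfl
    _ = ∑ i, ∫ x, partialDeriv i v x * partialDeriv i φ x := by
        rw [integral_finsetSum _ fun i _ => hint i]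
        exact Finset.sum_congr rfl fun i _ => integral_mul_periodised (hvp.partialDeriv i)
          (hcont i).locallyIntegrable (hφ.partialDeriv i)
    _ = -∫ x, v x * lap φ x := by
        simp only [hparts, Finset.sum_neg_distrib]
        rw [← integral_finsetSum _ fun i _ =>
          ((hφ.partialDeriv i).partialDeriv i).integrable_mul hv.continuous]
        simp only [← Finset.sum_mul, mul_comm (v _)]
        rfl

lemma IsWeakPoisson.hasWeakLaplacian (hε : ε ≠ 0) (hv : ContDiff ℝ 1 v) (hvp : ZPeriodic v)
    (hgp : ZPeriodic g) (hgloc : LocallyIntegrable g) (h : IsWeakPoisson ε v g) :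
    HasWeakLaplacian v fun x => g x / ε ^ 2 := by
  intro φ hφ
  have htest := h _ hφ.contDiff_periodised (zperiodic_periodised φ)
  rw [integral_dotP_grad_periodised hv hvp hφ, integral_mul_periodised hgp hgloc hφ] at htest
  simp only [div_mul_eq_mul_div, integral_div]
  rw [eq_div_iff (pow_ne_zero 2 hε)]
  linarith

end WeakLaplacian

section LebesgueBound

variable {d : ℕ} {q : ℝ≥0∞} {s : ℝ} {f φ : (Fin d → ℝ) → ℝ}

lemma ZPeriodic.setLIntegral_comp_add_smul_le {F : (Fin d → ℝ) → ℝ≥0∞} (hF : ZPeriodic F)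
    (hm : Measurable F) (hs : s ∈ Ioc (0 : ℝ) 1) (x : Fin d → ℝ) (R : ℝ) :
    ∫⁻ z in Metric.closedBall 0 R, F (x + s • z)
      ≤ ENNReal.ofReal (s ^ d)⁻¹ * (volume (Metric.closedBall (0 : Fin d → ℝ) (R + 1))
        * ∫⁻ z, F z ∂(torusMeasure d)) := by
  set G := (Metric.closedBall x R).indicator F
  have hG : Measurable G := hm.indicator measurableSet_closedBall
  have hball {z : Fin d → ℝ} (hz : z ∈ Metric.closedBall (0 : Fin d → ℝ) R) :
      x + s • z ∈ Metric.closedBall x R := by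
    rw [mem_closedBall_zero_iff] at hz
    rw [Metric.mem_closedBall, dist_eq_norm, add_sub_cancel_left, norm_smul, Real.norm_eq_abs,
      abs_of_pos hs.1]
    exact (mul_le_of_le_one_left (norm_nonneg z) hs.2).trans hz
  calc ∫⁻ z in Metric.closedBall 0 R, F (x + s • z)
      = ∫⁻ z in Metric.closedBall 0 R, G (x + s • z) :=
        setLIntegral_congr_fun measurableSet_closedBall fun z hz =>
          (indicator_of_mem (hball hz) F).symm
    _ ≤ ∫⁻ z, G (x + s • z) := setLIntegral_le_lintegral _ _
    _ = ∫⁻ w, G (x + w) ∂(Measure.map (s • ·) volume) :=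
        (lintegral_map (hG.comp (measurable_const_add x)) (measurable_const_smul s)).symm
    _ = ENNReal.ofReal (s ^ d)⁻¹ * ∫⁻ z in Metric.closedBall x R, F z := by
        rw [Measure.map_addHaar_smul _ hs.1.ne', lintegral_smul_measure,
          lintegral_add_left_eq_self, lintegral_indicator measurableSet_closedBall,
          Module.finrank_fin_fun, abs_of_pos (by have := hs.1; positivity), smul_eq_mul]
    _ ≤ _ := by gcongr; exact hF.lintegral_closedBall_le hm x R

lemma ZPeriodic.eLpNorm_comp_add_smul_le (hf : ZPeriodic f) (hm : Measurable f) (hq0 : q ≠ 0)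
    (hq : q ≠ ⊤) (hs : s ∈ Ioc (0 : ℝ) 1) (x : Fin d → ℝ) (R : ℝ) :
    eLpNorm (fun z => f (x + s • z)) q (volume.restrict (Metric.closedBall 0 R))
      ≤ ENNReal.ofReal (s ^ (-(d / q.toReal)))
        * (volume (Metric.closedBall (0 : Fin d → ℝ) (R + 1)) ^ (1 / q.toReal)
          * eLpNorm f q (torusMeasure d)) := by
  have hqpos : 0 < q.toReal := ENNReal.toReal_pos hq0 hq
  have hper : ZPeriodic fun y => ‖f y‖ₑ ^ q.toReal := fun y k => by simp only [hf y k]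
  have hscale : ENNReal.ofReal (s ^ d)⁻¹ ^ (1 / q.toReal)
      = ENNReal.ofReal (s ^ (-(d / q.toReal))) := by
    rw [ENNReal.ofReal_rpow_of_pos (by have := hs.1; positivity), ← Real.rpow_natCast,
      ← Real.rpow_neg hs.1.le, ← Real.rpow_mul hs.1.le]
    congr 2
    ring
  simp only [eLpNorm_eq_lintegral_rpow_enorm_toReal hq0 hq]
  rw [← hscale, ← ENNReal.mul_rpow_of_nonneg _ _ (by positivity),
    ← ENNReal.mul_rpow_of_nonneg _ _ (by positivity)]
  gcongr
  exact hper.setLIntegral_comp_add_smul_le (hm.enorm.pow_const _) hs x R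

lemma IsKernel.exists_bound (hφ : IsKernel φ) :
    ∃ B R : ℝ, (∀ z, |φ z| ≤ B) ∧ ∀ z ∉ Metric.closedBall (0 : Fin d → ℝ) R, φ z = 0 := by
  obtain ⟨B, hB⟩ := hφ.hasCompactSupport.exists_bound_of_continuous hφ.continuous
  obtain ⟨R, hR⟩ := hφ.hasCompactSupport.isCompact.isBounded.subset_closedBall 0
  exact ⟨B, R, hB, fun z hz => image_eq_zero_of_notMem_tsupport fun hmem => hz (hR hmem)⟩

lemma enorm_kernelAvg_le {B R : ℝ} (hB : ∀ z, |φ z| ≤ B)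
    (hR : ∀ z ∉ Metric.closedBall (0 : Fin d → ℝ) R, φ z = 0) (hq : 1 ≤ q) (hm : Measurable f)
    (x : Fin d → ℝ) :
    ‖kernelAvg φ s f x‖ₑ ≤ ENNReal.ofReal B *
      (eLpNorm (fun z => f (x + s • z)) q (volume.restrict (Metric.closedBall 0 R))
        * volume (Metric.closedBall (0 : Fin d → ℝ) R) ^ (1 - 1 / q.toReal)) := by
  have hmeas : Measurable fun z => f (x + s • z) := hm.comp (by fun_prop)
  calc ‖kernelAvg φ s f x‖ₑ
      = ‖∫ z in Metric.closedBall 0 R, φ z * f (x + s • z)‖ₑ := by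
        rw [setIntegral_eq_integral_of_forall_compl_eq_zero fun z hz => by rw [hR z hz, zero_mul],
          kernelAvg]
    _ ≤ ∫⁻ z in Metric.closedBall 0 R, ‖φ z * f (x + s • z)‖ₑ := enorm_integral_le_lintegral_enorm _
    _ ≤ ∫⁻ z in Metric.closedBall 0 R, ENNReal.ofReal B * ‖f (x + s • z)‖ₑ := by
        gcongr with z
        rw [enorm_mul, Real.enorm_eq_ofReal_abs (φ z)]
        gcongr
        exact hB z
    _ = ENNReal.ofReal B *
          eLpNorm (fun z => f (x + s • z)) 1 (volume.restrict (Metric.closedBall 0 R)) := by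
        rw [lintegral_const_mul _ hmeas.enorm, eLpNorm_one_eq_lintegral_enorm]
    _ ≤ _ := by
        gcongr
        simpa using eLpNorm_le_eLpNorm_mul_rpow_measure_univ hq hmeas.aestronglyMeasurable
          (μ := volume.restrict (Metric.closedBall 0 R))

lemma IsKernel.exists_abs_kernelAvg_le_LpNorm (hφ : IsKernel φ) (hq1 : 1 ≤ q) (hq : q ≠ ⊤) :
    ∃ C, 0 ≤ C ∧ ∀ f : (Fin d → ℝ) → ℝ, ZPeriodic f → Measurable f → MemLp f q (torusMeasure d) →
      ∀ s ∈ Ioc (0 : ℝ) 1, ∀ x, |kernelAvg φ s f x| ≤ C * LpNorm q f * s ^ (-(d / q.toReal)) := by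
  obtain ⟨B, R, hB, hR⟩ := hφ.exists_bound
  set V : ℝ≥0∞ := volume (Metric.closedBall (0 : Fin d → ℝ) R) ^ (1 - 1 / q.toReal)
  set W : ℝ≥0∞ := volume (Metric.closedBall (0 : Fin d → ℝ) (R + 1)) ^ (1 / q.toReal)
  have hq1' : 1 ≤ q.toReal := by simpa using ENNReal.toReal_mono hq hq1
  have hV : V ≠ ⊤ := ENNReal.rpow_ne_top_of_nonneg
    (sub_nonneg.mpr (div_le_one_of_le₀ hq1' (by positivity))) measure_closedBall_lt_top.ne
  have hW : W ≠ ⊤ := ENNReal.rpow_ne_top_of_nonneg (by positivity) measure_closedBall_lt_top.ne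
  have hB0 : 0 ≤ B := (abs_nonneg _).trans (hB 0)
  refine ⟨B * W.toReal * V.toReal, by positivity, fun f hf hm hLp s hs x => ?_⟩
  have hbound : ‖kernelAvg φ s f x‖ₑ ≤ ENNReal.ofReal B *
      (ENNReal.ofReal (s ^ (-(d / q.toReal))) * (W * eLpNorm f q (torusMeasure d)) * V) :=
    (enorm_kernelAvg_le hB hR hq1 hm x).trans (by
      gcongr
      exact hf.eLpNorm_comp_add_smul_le hm (one_pos.trans_le hq1).ne' hq hs x R)
  have hreal := ENNReal.toReal_mono (by finiteness [hLp.eLpNorm_ne_top]) hbound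
  simp only [toReal_enorm, Real.norm_eq_abs, ENNReal.toReal_mul, ENNReal.toReal_ofReal hB0,
    ENNReal.toReal_ofReal (Real.rpow_nonneg hs.1.le _)] at hreal
  exact hreal.trans_eq (by rw [LpNorm]; ring)

end LebesgueBound

section EllipticEstimates

variable {d : ℕ} {α : ℝ} {q : ℝ≥0∞} {u φ : (Fin d → ℝ) → ℝ}

lemma continuous_partialDeriv_partialDeriv (hu : ContDiff ℝ 2 u) (i j : Fin d) :
    Continuous (partialDeriv i (partialDeriv j u)) :=
  continuous_partialDeriv (contDiff_partialDeriv hu (by norm_num) j) i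

lemma continuous_lap (hu : ContDiff ℝ 2 u) : Continuous (lap u) :=
  continuous_finsetSum _ fun i _ => continuous_partialDeriv_partialDeriv hu i i

lemma exists_isHolderBounded_of_kernelAvg_lap_le (hα : α ∈ Ioo 0 1)
    {P : ((Fin d → ℝ) → ℝ) → ℝ → Prop}
    (h : ∀ φ, IsKernel φ → ∃ C, 0 ≤ C ∧ ∀ v K, P v K →
      ∀ s ∈ Ioc (0 : ℝ) 1, ∀ x, |kernelAvg (lap φ) s v x| ≤ C * K * s ^ α) :
    ∃ C, 0 ≤ C ∧ ∀ v K, P v K → ZPeriodic v → Continuous v → (∃ x, v x = 0) →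
      IsHolderBounded α v (C * K) := by
  have hker := isKernel_potentialKernel d
  obtain ⟨C, hC, hdecay⟩ := exists_isHolderBounded_of_hasLapDecay d hα
  obtain ⟨A, hA, hψ⟩ := h _ hker
  choose B hB hψ' using fun k => h _ (hker.partialDeriv k)
  refine ⟨C * (A + ∑ k, B k), mul_nonneg hC (add_nonneg hA (Finset.sum_nonneg fun k _ => hB k)),
    fun v K hP hv hc hzero => ?_⟩
  have hnonneg {D : ℝ} {f : (Fin d → ℝ) → ℝ}
      (hf : ∀ s ∈ Ioc (0 : ℝ) 1, ∀ x, |kernelAvg f s v x| ≤ D * K * s ^ α) : 0 ≤ D * K := by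
    simpa using (abs_nonneg _).trans (hf 1 ⟨one_pos, le_rfl⟩ 0)
  have hAK := hnonneg (hψ v K hP)
  have hBK (k : Fin d) := hnonneg (hψ' k v K hP)
  rw [mul_assoc]
  refine hdecay v _ hv hc hzero fun s hs x => ?_
  have hs0 : 0 ≤ s ^ α := Real.rpow_nonneg hs.1.le α
  simp only [add_mul, Finset.sum_mul]
  refine ⟨(hψ v K hP s hs x).trans (le_add_of_nonneg_right (Finset.sum_nonneg fun k _ =>
    mul_nonneg (hBK k) hs0)), fun k => (hψ' k v K hP s hs x).trans ?_⟩
  exact (Finset.single_le_sum (f := fun k => B k * K * s ^ α)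
    (fun k _ => mul_nonneg (hBK k) hs0) (Finset.mem_univ k)).trans
    (le_add_of_nonneg_left (mul_nonneg hAK hs0))

theorem exists_isHolderBounded_of_hasWeakLaplacian (d : ℕ) (hα : α ∈ Ioo 0 1) (hq1 : 1 ≤ q)
    (hq : q ≠ ⊤) (hαq : α ≤ 2 - d / q.toReal) :
    ∃ C, 0 ≤ C ∧ ∀ v g : (Fin d → ℝ) → ℝ, ZPeriodic v → Continuous v → (∃ x, v x = 0) →
      ZPeriodic g → Measurable g → MemLp g q (torusMeasure d) → HasWeakLaplacian v g →
      IsHolderBounded α v (C * LpNorm q g) := by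
  refine (exists_isHolderBounded_of_kernelAvg_lap_le (d := d) hα
    (P := fun v K => ∃ g, ZPeriodic g ∧ Measurable g ∧ MemLp g q (torusMeasure d) ∧
      HasWeakLaplacian v g ∧ K = LpNorm q g) ?_).imp fun C ⟨hC, hest⟩ =>
      ⟨hC, fun v g hv hc hzero hg hm hLp h => hest v _ ⟨g, hg, hm, hLp, h, rfl⟩ hv hc hzero⟩
  intro φ hφ
  obtain ⟨C, hC, hφC⟩ := hφ.exists_abs_kernelAvg_le_LpNorm hq1 hq
  refine ⟨C, hC, ?_⟩
  rintro v _ ⟨g, hg, hm, hLp, h, rfl⟩ s hs x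
  have hnorm : 0 ≤ C * LpNorm q g := mul_nonneg hC ENNReal.toReal_nonneg
  calc |kernelAvg (lap φ) s v x| = s ^ 2 * |kernelAvg φ s g x| := by
        rw [h.kernelAvg_lap hφ hs.1, abs_mul, abs_of_nonneg (sq_nonneg s)]
    _ ≤ s ^ 2 * (C * LpNorm q g * s ^ (-(d / q.toReal))) := by
        gcongr
        exact hφC g hg hm hLp s hs x
    _ = C * LpNorm q g * s ^ (2 - d / q.toReal) := by
        rw [sub_eq_add_neg, Real.rpow_add hs.1, Real.rpow_two]
        ring
    _ ≤ C * LpNorm q g * s ^ α :=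
        mul_le_mul_of_nonneg_left (Real.rpow_le_rpow_of_exponent_ge hs.1 hs.2 hαq) hnorm

lemma IsKernel.kernelAvg_lap_partialDeriv {s : ℝ} (hφ : IsKernel φ) (hu : ContDiff ℝ 2 u)
    (hs : 0 < s) (k : Fin d) (x : Fin d → ℝ) :
    kernelAvg (_root_.lap φ) s (_root_.partialDeriv k u) x
      = -s * kernelAvg (_root_.partialDeriv k φ) s (_root_.lap u) x := by
  have hφ3 : ContDiff ℝ 3 φ := contDiff_infty.mp hφ.contDiff 3
  have hcomm : -s * kernelAvg (_root_.lap φ) s (_root_.partialDeriv k u) x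
      = s ^ 2 * kernelAvg (_root_.partialDeriv k φ) s (_root_.lap u) x := by
    rw [← kernelAvg_partialDeriv_left hφ.lap (hu.of_le (by norm_num)), ← lap_partialDeriv hφ3,
      (hasWeakLaplacian_lap hu).kernelAvg_lap (hφ.partialDeriv k) hs]
  apply mul_left_cancel₀ (neg_ne_zero.mpr hs.ne')
  rw [hcomm]
  ring

theorem exists_isHolderBounded_partialDeriv (d : ℕ) (hα : α ∈ Ioo 0 1) :
    ∃ C, 0 ≤ C ∧ ∀ (u : (Fin d → ℝ) → ℝ) (F : ℝ), ContDiff ℝ 2 u → ZPeriodic u →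
      (∀ x, |lap u x| ≤ F) → ∀ k, IsHolderBounded α (partialDeriv k u) (C * F) := by
  refine (exists_isHolderBounded_of_kernelAvg_lap_le (d := d) hα
    (P := fun v F => ∃ u k, ContDiff ℝ 2 u ∧ (∀ x, |lap u x| ≤ F) ∧ v = partialDeriv k u)
    ?_).imp fun C ⟨hC, hest⟩ =>
      ⟨hC, fun u F hu hup hF k => hest _ F ⟨u, k, hu, hF, rfl⟩ (hup.partialDeriv k)
        (continuous_partialDeriv (hu.of_le one_le_two) k)
        (hup.exists_partialDeriv_eq_zero hu.continuous k)⟩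
  intro φ hφ
  refine ⟨∑ k, ∫ z, |partialDeriv k φ z|, Finset.sum_nonneg fun k _ => by positivity, ?_⟩
  rintro _ F ⟨u, k, hu, hF, rfl⟩ s hs x
  have hF0 : 0 ≤ F := (abs_nonneg _).trans (hF 0)
  have hsα : s ≤ s ^ α := by
    simpa using Real.rpow_le_rpow_of_exponent_ge hs.1 hs.2 hα.2.le
  calc |kernelAvg (lap φ) s (partialDeriv k u) x|
      = |kernelAvg (partialDeriv k φ) s (lap u) x| * s := by
        rw [hφ.kernelAvg_lap_partialDeriv hu hs.1, abs_mul, abs_neg, abs_of_pos hs.1, mul_comm]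
    _ ≤ (∫ z, |partialDeriv k φ z|) * F * s := by
        gcongr
        exacts [hs.1.le, abs_kernelAvg_le (hφ.partialDeriv k) hF s x]
    _ ≤ (∑ k, ∫ z, |partialDeriv k φ z|) * F * s ^ α := by
        have := hs.1.le
        gcongr
        exact Finset.single_le_sum (f := fun k => ∫ z, |partialDeriv k φ z|)
          (fun k _ => by positivity) (Finset.mem_univ k)

lemma IsKernel.kernelAvg_lap_partialDeriv_partialDeriv {s : ℝ} (hφ : IsKernel φ)
    (hu : ContDiff ℝ 2 u) (hs : 0 < s) (i j : Fin d) (x : Fin d → ℝ) :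
    kernelAvg (_root_.lap φ) s (_root_.partialDeriv i (_root_.partialDeriv j u)) x
      = kernelAvg (_root_.partialDeriv j (_root_.partialDeriv i φ)) s (_root_.lap u) x := by
  have hφ3 : ContDiff ℝ 3 φ := contDiff_infty.mp hφ.contDiff 3
  apply mul_left_cancel₀ (neg_ne_zero.mpr hs.ne')
  rw [← kernelAvg_partialDeriv_left hφ.lap (contDiff_partialDeriv hu (by norm_num) j),
    ← lap_partialDeriv hφ3, (hφ.partialDeriv i).kernelAvg_lap_partialDeriv hu hs]

theorem exists_isHolderBounded_partialDeriv_partialDeriv (d : ℕ) (hα : α ∈ Ioo 0 1) :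
    ∃ C, 0 ≤ C ∧ ∀ (u : (Fin d → ℝ) → ℝ) (F : ℝ), ContDiff ℝ 2 u → ZPeriodic u →
      IsHolderBounded α (lap u) F →
      ∀ i j, IsHolderBounded α (partialDeriv i (partialDeriv j u)) (C * F) := by
  refine (exists_isHolderBounded_of_kernelAvg_lap_le (d := d) hα
    (P := fun v F => ∃ u i j, ContDiff ℝ 2 u ∧ IsHolderBounded α (lap u) F ∧
      v = partialDeriv i (partialDeriv j u)) ?_).imp fun C ⟨hC, hest⟩ =>
      ⟨hC, fun u F hu hup hF i j => hest _ F ⟨u, i, j, hu, hF, rfl⟩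
        ((hup.partialDeriv j).partialDeriv i) (continuous_partialDeriv_partialDeriv hu i j)
        ((hup.partialDeriv j).exists_partialDeriv_eq_zero
          (continuous_partialDeriv (hu.of_le one_le_two) j) i)⟩
  intro φ hφ
  set c := fun i j => ∫ z, |partialDeriv j (partialDeriv i φ) z| * ‖z‖ ^ α
  have hc (i j : Fin d) : 0 ≤ c i j := by positivity
  refine ⟨∑ i, ∑ j, c i j, by positivity, ?_⟩
  rintro _ F ⟨u, i, j, hu, hF, rfl⟩ s hs x
  have hF0 := hF.nonneg
  have hker := (hφ.partialDeriv i).partialDeriv j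
  calc |kernelAvg (lap φ) s (partialDeriv i (partialDeriv j u)) x|
      = |kernelAvg (partialDeriv j (partialDeriv i φ)) s (lap u) x| := by
        rw [hφ.kernelAvg_lap_partialDeriv_partialDeriv hu hs.1]
    _ ≤ c i j * F * s ^ α := abs_kernelAvg_le_of_holder hker
        ((hφ.partialDeriv i).integral_partialDeriv j) (continuous_lap hu) hα.1.le hF.2 hs.1.le x
    _ ≤ (∑ i, ∑ j, c i j) * F * s ^ α := by
        have := Real.rpow_nonneg hs.1.le α
        gcongr
        calc c i j ≤ ∑ j, c i j := Finset.single_le_sum (fun j _ => hc i j) (Finset.mem_univ j)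
          _ ≤ ∑ i, ∑ j, c i j := Finset.single_le_sum (f := fun i => ∑ j, c i j)
            (fun i _ => Finset.sum_nonneg fun j _ => hc i j) (Finset.mem_univ i)

end EllipticEstimates

section TorusHolderNorms

variable {d : ℕ} {α M : ℝ} {u : (Fin d → ℝ) → ℝ}

lemma norm_le_euclNorm (v : Fin d → ℝ) : ‖v‖ ≤ euclNorm v :=
  (pi_norm_le_iff_of_nonneg (Real.sqrt_nonneg _)).mpr fun i => Real.abs_le_sqrt
    (Finset.single_le_sum (f := fun i => v i ^ 2) (fun _ _ => sq_nonneg _) (Finset.mem_univ i))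

lemma euclNorm_le_card_mul {v : Fin d → ℝ} (hM : 0 ≤ M) (h : ∀ i, |v i| ≤ M) :
    euclNorm v ≤ d * M := by
  refine Real.sqrt_le_iff.mpr ⟨by positivity, ?_⟩
  calc ∑ i, v i ^ 2 ≤ ∑ _i : Fin d, M ^ 2 :=
        Finset.sum_le_sum fun i _ => sq_le_sq' (abs_le.mp (h i)).1 (abs_le.mp (h i)).2
    _ = d * M ^ 2 := by simp
    _ ≤ d ^ 2 * M ^ 2 := by
        gcongr
        exact_mod_cast Nat.le_self_pow two_ne_zero d
    _ = (d * M) ^ 2 := (mul_pow ..).symm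

lemma frobNorm_eq (A : Fin d → Fin d → ℝ) : frobNorm A = euclNorm fun i => euclNorm (A i) := by
  simp only [frobNorm, euclNorm, Real.sq_sqrt (Finset.sum_nonneg fun _ _ => sq_nonneg _)]

lemma frobNorm_le_card_mul {A : Fin d → Fin d → ℝ} (hM : 0 ≤ M) (h : ∀ i j, |A i j| ≤ M) :
    frobNorm A ≤ d * (d * M) := by
  rw [frobNorm_eq]
  exact euclNorm_le_card_mul (by positivity) fun i =>
    (abs_of_nonneg (Real.sqrt_nonneg _)).trans_le (euclNorm_le_card_mul hM (h i))

lemma le_mul_tdist_rpow {t : ℝ} (hα : 0 < α) (hM : 0 ≤ M) (ht : 0 ≤ t) {x y : Fin d → ℝ}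
    (h : ∀ k : Fin d → ℤ, t ≤ M * ‖x + latVec k - y‖ ^ α) : t ≤ M * tdist x y ^ α := by
  obtain rfl | hM := hM.eq_or_lt
  · simpa using h 0
  have ht' : 0 ≤ t / M := by positivity
  have hk (k : Fin d → ℤ) : (t / M) ^ α⁻¹ ≤ euclNorm (x - y + latVec k) :=
    calc (t / M) ^ α⁻¹ ≤ ‖x + latVec k - y‖ :=
          (Real.rpow_inv_le_iff_of_pos ht' (norm_nonneg _) hα).mpr ((div_le_iff₀' hM).mpr (h k))
      _ ≤ euclNorm (x - y + latVec k) := by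
          rw [add_sub_right_comm]
          exact norm_le_euclNorm _
  exact (div_le_iff₀' hM).mp ((Real.rpow_inv_le_iff_of_pos ht'
    (Real.iInf_nonneg fun _ => Real.sqrt_nonneg _) hα).mp (le_ciInf hk))

lemma IsHolderBounded.holderBnd (h : IsHolderBounded α u M) (hα : 0 < α) (hu : ZPeriodic u) :
    HolderBnd α u (2 * M) :=
  ⟨M, M, h.nonneg, h.nonneg, (two_mul M).ge, h.1, fun x y =>
    le_mul_tdist_rpow hα h.nonneg (abs_nonneg _) fun k => by
      simpa only [hu x k] using h.2 (x + latVec k) y⟩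

lemma holderBndVec_of_isHolderBounded {G : (Fin d → ℝ) → Fin d → ℝ} (hα : 0 < α) (hM : 0 ≤ M)
    (hG : ZPeriodic G) (h : ∀ i, IsHolderBounded α (fun x => G x i) M) :
    HolderBndVec α G (2 * (d * M)) := by
  refine ⟨d * M, d * M, by positivity, by positivity, (two_mul _).ge,
    fun x => euclNorm_le_card_mul hM fun i => (h i).1 x, fun x y => ?_⟩
  refine le_mul_tdist_rpow hα (by positivity) (Real.sqrt_nonneg _) fun k => ?_
  rw [← hG x k, mul_assoc]
  exact euclNorm_le_card_mul (by positivity) fun i => (h i).2 _ _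

lemma holderBndMat_of_isHolderBounded {A : (Fin d → ℝ) → Fin d → Fin d → ℝ} (hα : 0 < α)
    (hM : 0 ≤ M) (hA : ZPeriodic A) (h : ∀ i j, IsHolderBounded α (fun x => A x i j) M) :
    HolderBndMat α A (2 * (d * (d * M))) := by
  refine ⟨d * (d * M), d * (d * M), by positivity, by positivity, (two_mul _).ge,
    fun x => frobNorm_le_card_mul hM fun i j => (h i j).1 x, fun x y => ?_⟩
  refine le_mul_tdist_rpow hα (by positivity) (Real.sqrt_nonneg _) fun k => ?_
  rw [← hA x k, mul_assoc, mul_assoc]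
  exact frobNorm_le_card_mul (by positivity) fun i j => (h i j).2 _ _

lemma c1Bnd_of_isHolderBounded (hα : 0 < α) (hM : 0 ≤ M) (hu : ZPeriodic u)
    (h0 : IsHolderBounded α u M) (h1 : ∀ i, IsHolderBounded α (partialDeriv i u) M) :
    C1Bnd α u (2 * M + 2 * (d * M)) :=
  ⟨2 * M, 2 * (d * M), by positivity, by positivity, le_rfl, h0.holderBnd hα hu,
    holderBndVec_of_isHolderBounded hα hM (fun x k => funext fun i => hu.partialDeriv i x k) h1⟩

lemma c2Bnd_of_isHolderBounded (hα : 0 < α) (hM : 0 ≤ M) (hu : ZPeriodic u)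
    (h0 : IsHolderBounded α u M) (h1 : ∀ i, IsHolderBounded α (partialDeriv i u) M)
    (h2 : ∀ i j, IsHolderBounded α (partialDeriv i (partialDeriv j u)) M) :
    C2Bnd α u (2 * M + 2 * (d * M) + 2 * (d * (d * M))) :=
  ⟨2 * M, 2 * (d * M), 2 * (d * (d * M)), by positivity, by positivity, by positivity, le_rfl,
    h0.holderBnd hα hu,
    holderBndVec_of_isHolderBounded hα hM (fun x k => funext fun i => hu.partialDeriv i x k) h1,
    holderBndMat_of_isHolderBounded hα hM
      (fun x k => funext fun i => funext fun j => (hu.partialDeriv j).partialDeriv i x k) h2⟩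

lemma C1Bnd.mono {K L : ℝ} (h : C1Bnd α u K) (hKL : K ≤ L) : C1Bnd α u L := by
  obtain ⟨K₀, K₁, h₀, h₁, hK, hbnd⟩ := h
  exact ⟨K₀, K₁, h₀, h₁, hK.trans hKL, hbnd⟩

lemma C2Bnd.mono {K L : ℝ} (h : C2Bnd α u K) (hKL : K ≤ L) : C2Bnd α u L := by
  obtain ⟨K₀, K₁, K₂, h₀, h₁, h₂, hK, hbnd⟩ := h
  exact ⟨K₀, K₁, K₂, h₀, h₁, h₂, hK.trans hKL, hbnd⟩

end TorusHolderNorms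

section PoissonBoltzmann

variable {d : ℕ} {α A X c : ℝ} {u U : (Fin d → ℝ) → ℝ} {x : Fin d → ℝ}

/-- `u` is a classical solution of the Poisson–Boltzmann equation `c Δu = e^{U + u} - 1` on the
torus. -/
structure IsPoissonBoltzmann {d : ℕ} (c : ℝ) (U u : (Fin d → ℝ) → ℝ) : Prop where
  contDiff : ContDiff ℝ 2 u
  zPeriodic : ZPeriodic u
  mul_lap_eq : ∀ x, c * lap u x = Real.exp (U x + u x) - 1

lemma hasDerivAt_comp_add_smul_single (hu : Differentiable ℝ u) (x : Fin d → ℝ) (k : Fin d)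
    (t : ℝ) : HasDerivAt (fun t : ℝ => u (x + t • Pi.single k 1))
      (partialDeriv k u (x + t • Pi.single k 1)) t := by
  have hline : HasDerivAt (fun t : ℝ => x + t • (Pi.single k 1 : Fin d → ℝ)) (Pi.single k 1) t := by
    simpa using ((hasDerivAt_id t).smul_const (Pi.single k 1 : Fin d → ℝ)).const_add x
  exact (hu _).hasFDerivAt.comp_hasDerivAt t hline

lemma partialDeriv_partialDeriv_nonpos_of_isMax (hu : ContDiff ℝ 2 u) (hx : ∀ y, u y ≤ u x)
    (k : Fin d) : partialDeriv k (partialDeriv k u) x ≤ 0 := by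
  by_contra! hpos
  set g : ℝ → ℝ := fun t => u (x + t • Pi.single k 1) with hg
  have hdu : Differentiable ℝ (partialDeriv k u) :=
    (contDiff_partialDeriv (m := 1) hu (by norm_num) k).differentiable one_ne_zero
  have hderiv (t : ℝ) := hasDerivAt_comp_add_smul_single (hu.differentiable two_ne_zero) x k t
  have hsecond : deriv (deriv g) 0 = partialDeriv k (partialDeriv k u) x := by
    rw [funext fun t => (hderiv t).deriv, (hasDerivAt_comp_add_smul_single hdu x k 0).deriv]
    simp
  have hmax : IsLocalMax g 0 := Filter.Eventually.of_forall fun t => by simpa [hg] using hx _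
  have hmin : IsLocalMin g 0 := isLocalMin_of_deriv_deriv_pos (hsecond ▸ hpos) hmax.deriv_eq_zero
    (hderiv 0).continuousAt
  have hconst : g =ᶠ[nhds 0] fun _ => g 0 := by
    filter_upwards [hmax, hmin] with t hle hge using le_antisymm hle hge
  have hzero : deriv (deriv g) 0 = 0 := by
    rw [hconst.deriv.deriv_eq]
    simp
  exact (hsecond ▸ hpos).ne' hzero

lemma lap_nonpos_of_isMax (hu : ContDiff ℝ 2 u) (hx : ∀ y, u y ≤ u x) : lap u x ≤ 0 :=
  Finset.sum_nonpos fun k _ => partialDeriv_partialDeriv_nonpos_of_isMax hu hx k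

lemma lap_neg : lap (fun y => -u y) x = -lap u x := by
  simp only [lap, fderiv_fun_neg, neg_apply, Finset.sum_neg_distrib]

lemma abs_exp_sub_exp_le {a b M : ℝ} (ha : a ≤ M) (hb : b ≤ M) :
    |Real.exp a - Real.exp b| ≤ Real.exp M * |a - b| := by
  simpa using Convex.norm_image_sub_le_of_norm_deriv_le (f := Real.exp) (s := Iic M)
    (fun z _ => Real.differentiableAt_exp) (fun z hz => by simpa using hz) (convex_Iic M) hb ha

lemma abs_exp_sub_one_le_exp_abs (a : ℝ) : |Real.exp a - 1| ≤ Real.exp |a| := by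
  have hone : 1 ≤ Real.exp |a| := Real.one_le_exp (abs_nonneg a)
  exact abs_sub_le_iff.mpr ⟨by linarith [Real.exp_le_exp.mpr (le_abs_self a)],
    by linarith [Real.exp_pos a]⟩

namespace IsPoissonBoltzmann

lemma abs_le_of_forall_abs_le {M : ℝ} (h : IsPoissonBoltzmann c U u) (hc : 0 ≤ c)
    (hU : ∀ x, |U x| ≤ M)
    (x : Fin d → ℝ) : |u x| ≤ M := by
  refine abs_le.mpr ⟨?_, ?_⟩
  · have hper : ZPeriodic fun y => -u y := fun y k => by simp only [h.zPeriodic y k]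
    obtain ⟨y, hy⟩ := hper.exists_isMax h.contDiff.continuous.neg
    have hlap : 0 ≤ lap u y := by simpa [lap_neg] using lap_nonpos_of_isMax h.contDiff.neg hy
    have hexp : 0 ≤ U y + u y := by
      rw [← Real.one_le_exp_iff]
      linarith [h.mul_lap_eq y, mul_nonneg hc hlap]
    linarith [hy x, (abs_le.mp (hU y)).2]
  · obtain ⟨y, hy⟩ := h.zPeriodic.exists_isMax h.contDiff.continuous
    have hlap : lap u y ≤ 0 := lap_nonpos_of_isMax h.contDiff hy
    have hexp : U y + u y ≤ 0 := by
      rw [← Real.exp_le_one_iff]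
      linarith [h.mul_lap_eq y, mul_nonpos_of_nonneg_of_nonpos hc hlap]
    linarith [hy x, (abs_le.mp (hU y)).1]

lemma abs_exponent_le (h : IsPoissonBoltzmann c U u) (hc : 0 ≤ c) (hU : ∀ x, |U x| ≤ A * X)
    (x : Fin d → ℝ) : |U x + u x| ≤ 2 * A * X :=
  (abs_add_le _ _).trans (by linarith [hU x, h.abs_le_of_forall_abs_le hc hU x])

lemma lap_eq (h : IsPoissonBoltzmann c U u) (hc : c ≠ 0) (x : Fin d → ℝ) :
    lap u x = c⁻¹ * (Real.exp (U x + u x) - 1) := by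
  rw [← h.mul_lap_eq, inv_mul_cancel_left₀ hc]

lemma abs_lap_le (h : IsPoissonBoltzmann c U u) (hc : 0 < c) (hcX : c⁻¹ ≤ X)
    (hU : ∀ x, |U x| ≤ A * X) (x : Fin d → ℝ) : |lap u x| ≤ Real.exp ((2 * A + 1) * X) := by
  calc |lap u x| = c⁻¹ * |Real.exp (U x + u x) - 1| := by
        rw [h.lap_eq hc.ne', abs_mul, abs_of_pos (inv_pos.mpr hc)]
    _ ≤ Real.exp X * Real.exp (2 * A * X) := by
        gcongr
        · linarith [Real.add_one_le_exp X]
        · exact (abs_exp_sub_one_le_exp_abs _).trans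
            (Real.exp_le_exp.mpr (h.abs_exponent_le hc.le hU x))
    _ = Real.exp ((2 * A + 1) * X) := by
        rw [← Real.exp_add]
        ring_nf

lemma abs_lap_sub_le (h : IsPoissonBoltzmann c U u) (hc : 0 < c) (hcX : c⁻¹ ≤ X)
    (hU : ∀ x, |U x| ≤ A * X) (x y : Fin d → ℝ) :
    |lap u x - lap u y| ≤ Real.exp ((2 * A + 1) * X) * (|U x - U y| + |u x - u y|) := by
  have hle (z : Fin d → ℝ) : U z + u z ≤ 2 * A * X :=
    (le_abs_self _).trans (h.abs_exponent_le hc.le hU z)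
  calc |lap u x - lap u y| = c⁻¹ * |Real.exp (U x + u x) - Real.exp (U y + u y)| := by
        rw [h.lap_eq hc.ne', h.lap_eq hc.ne', ← mul_sub, sub_sub_sub_cancel_right, abs_mul,
          abs_of_pos (inv_pos.mpr hc)]
    _ ≤ Real.exp X * (Real.exp (2 * A * X) * |U x + u x - (U y + u y)|) := by
        gcongr
        · linarith [Real.add_one_le_exp X]
        · exact abs_exp_sub_exp_le (hle x) (hle y)
    _ = Real.exp ((2 * A + 1) * X) * |(U x - U y) + (u x - u y)| := by
        rw [← mul_assoc, ← Real.exp_add]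
        ring_nf
    _ ≤ Real.exp ((2 * A + 1) * X) * (|U x - U y| + |u x - u y|) := by
        gcongr
        exact abs_add_le _ _

end IsPoissonBoltzmann

theorem exists_isHolderBounded_of_isPoissonBoltzmann (d : ℕ) (hα : α ∈ Ioo 0 1) (hA : 0 ≤ A) :
    ∃ B, 0 ≤ B ∧ ∀ (c X : ℝ) (U u : (Fin d → ℝ) → ℝ), 0 < c → c⁻¹ ≤ X → (∀ x, |U x| ≤ A * X) →
      IsPoissonBoltzmann c U u →
      IsHolderBounded α u (B * Real.exp ((2 * A + 1) * X)) ∧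
        ∀ k, IsHolderBounded α (partialDeriv k u) (B * Real.exp ((2 * A + 1) * X)) := by
  obtain ⟨C, hC, hgrad⟩ := exists_isHolderBounded_partialDeriv d hα
  refine ⟨d * C + 2 * A + C, by positivity, fun c X U u hc hcX hU h => ?_⟩
  set E := Real.exp ((2 * A + 1) * X)
  have hX : 0 < X := (inv_pos.mpr hc).trans_le hcX
  have hE : 0 < E := Real.exp_pos _
  have hXE : X ≤ E := by nlinarith [Real.add_one_le_exp ((2 * A + 1) * X)]
  have hdu := hgrad u E h.contDiff h.zPeriodic (h.abs_lap_le hc hcX hU)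
  have hLip (x y : Fin d → ℝ) (hxy : ‖x - y‖ ∈ Ioc (0 : ℝ) 1) :
      |u x - u y| ≤ d * (C * E) * ‖x - y‖ ^ α :=
    calc |u x - u y| ≤ d * (C * E) * ‖x - y‖ :=
          abs_sub_le_of_abs_partialDeriv_le (h.contDiff.differentiable two_ne_zero)
            (fun k => (hdu k).1) x y
      _ ≤ d * (C * E) * ‖x - y‖ ^ α := by
          gcongr
          simpa using Real.rpow_le_rpow_of_exponent_ge hxy.1 hxy.2 hα.2.le
  refine ⟨(IsHolderBounded.of_norm_sub_le_one hα.1 (by positivity)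
      (h.abs_le_of_forall_abs_le hc.le hU) hLip).mono ?_,
    fun k => (hdu k).mono ?_⟩
  · nlinarith [mul_nonneg hC hE.le]
  · have : 0 ≤ d * C + 2 * A := by positivity
    nlinarith

theorem exists_isHolderBounded_hess_of_isPoissonBoltzmann (d : ℕ) (hα : α ∈ Ioo 0 1)
    (hA : 0 ≤ A) :
    ∃ B, 0 ≤ B ∧ ∀ (c X : ℝ) (U u : (Fin d → ℝ) → ℝ), 0 < c → c⁻¹ ≤ X →
      IsHolderBounded α U (A * X) → IsPoissonBoltzmann c U u →
      ∀ i j, IsHolderBounded α (partialDeriv i (partialDeriv j u))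
        (B * Real.exp (2 * (2 * A + 1) * X)) := by
  obtain ⟨B, hB, hu⟩ := exists_isHolderBounded_of_isPoissonBoltzmann d hα hA
  obtain ⟨C, hC, hhess⟩ := exists_isHolderBounded_partialDeriv_partialDeriv d hα
  refine ⟨C * (1 + A + B), by positivity, fun c X U u hc hcX hU h i j => ?_⟩
  set E := Real.exp ((2 * A + 1) * X) with hE_def
  have hX : 0 < X := (inv_pos.mpr hc).trans_le hcX
  have hE : 1 ≤ E := Real.one_le_exp (by positivity)
  have hXE : X ≤ E := by nlinarith [Real.add_one_le_exp ((2 * A + 1) * X)]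
  have hE2 : Real.exp (2 * (2 * A + 1) * X) = E ^ 2 := by
    rw [hE_def, ← Real.exp_nat_mul]
    push_cast
    ring_nf
  have hlap : IsHolderBounded α (lap u) ((1 + A + B) * E ^ 2) := by
    refine ⟨fun x => (h.abs_lap_le hc hcX hU.1 x).trans ?_, fun x y => ?_⟩
    · nlinarith [mul_nonneg (add_nonneg hA hB) (sq_nonneg E)]
    calc |lap u x - lap u y| ≤ E * (|U x - U y| + |u x - u y|) := h.abs_lap_sub_le hc hcX hU.1 x y
      _ ≤ E * (A * E * ‖x - y‖ ^ α + B * E * ‖x - y‖ ^ α) := by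
          gcongr
          · exact (hU.2 x y).trans (by gcongr)
          · exact (hu c X U u hc hcX hU.1 h).1.2 x y
      _ = (A + B) * E ^ 2 * ‖x - y‖ ^ α := by ring
      _ ≤ (1 + A + B) * E ^ 2 * ‖x - y‖ ^ α := by
          gcongr
          linarith
  rw [hE2, mul_assoc]
  exact hhess u _ h.contDiff h.zPeriodic hlap i j

end PoissonBoltzmann

section Potential

variable {d : ℕ} {α ε : ℝ} {q : ℝ≥0∞} {h : (Fin d → ℝ) → ℝ}

lemma LpNorm_one_sub_div_le (hq1 : 1 ≤ q) (hh : MemLp h q (torusMeasure d)) :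
    LpNorm q (fun x => (1 - h x) / ε ^ 2) ≤ (1 + LpNorm q h) / ε ^ 2 := by
  have hsub : LpNorm q (fun x => 1 - h x) ≤ 1 + LpNorm q h := by
    have hone : eLpNorm (fun _ => (1 : ℝ)) q (torusMeasure d) = 1 := by
      simp [eLpNorm_const _ (one_pos.trans_le hq1).ne' (IsProbabilityMeasure.ne_zero _)]
    have htri := eLpNorm_sub_le (aestronglyMeasurable_const (b := (1 : ℝ)))
      hh.aestronglyMeasurable hq1
    rw [hone] at htri
    have htop := ENNReal.add_ne_top.mpr ⟨ENNReal.one_ne_top, hh.eLpNorm_ne_top⟩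
    calc LpNorm q (fun x => 1 - h x) ≤ (1 + eLpNorm h q (torusMeasure d)).toReal :=
          ENNReal.toReal_mono htop htri
      _ = 1 + LpNorm q h := ENNReal.toReal_add ENNReal.one_ne_top hh.eLpNorm_ne_top
  have hsmul : LpNorm q (fun x => (1 - h x) / ε ^ 2) = (ε ^ 2)⁻¹ * LpNorm q fun x => 1 - h x := by
    have hfun : (fun x => (1 - h x) / ε ^ 2) = (ε ^ 2)⁻¹ • fun x => 1 - h x :=
      funext fun x => div_eq_inv_mul _ _
    rw [LpNorm, hfun, eLpNorm_const_smul, ENNReal.toReal_mul, toReal_enorm,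
      Real.norm_of_nonneg (by positivity), LpNorm]
  rw [hsmul, div_eq_inv_mul]
  gcongr

theorem exists_isHolderBounded_of_isWeakPoisson (d : ℕ) (hα : α ∈ Ioo 0 1) (hq1 : 1 ≤ q)
    (hq : q ≠ ⊤) (hαq : α ≤ 2 - d / q.toReal) :
    ∃ A, 0 ≤ A ∧ ∀ (ε : ℝ) (h U : (Fin d → ℝ) → ℝ), ε ≠ 0 → Measurable h → ZPeriodic h →
      MemLp h q (torusMeasure d) → ContDiff ℝ 1 U → ZPeriodic U →
      (∫ x, U x ∂(torusMeasure d)) = 0 → IsWeakPoisson ε U (fun x => 1 - h x) →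
      IsHolderBounded α U (A * ((1 + LpNorm q h) / ε ^ 2)) := by
  obtain ⟨A, hA, hest⟩ := exists_isHolderBounded_of_hasWeakLaplacian d hα hq1 hq hαq
  refine ⟨A, hA, fun ε h U hε hm hper hLp hU hUper hU0 hweak => ?_⟩
  have hgper : ZPeriodic fun x => 1 - h x := fun x k => by simp only [hper x k]
  have hgm : Measurable fun x => 1 - h x := hm.const_sub 1
  have hgLp : MemLp (fun x => 1 - h x) q (torusMeasure d) := (memLp_const 1).sub hLp
  have hlap := hweak.hasWeakLaplacian hε hU hUper hgper
    (hgper.locallyIntegrable hgm (hgLp.integrable hq1))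
  refine (hest U _ hUper hU.continuous (hUper.exists_eq_zero_of_integral_eq_zero hU.continuous hU0)
    (fun x k => by simp only [hper x k]) (hgm.div_const _) ?_ hlap).mono ?_
  · simpa only [div_eq_mul_inv] using hgLp.mul_const (ε ^ 2)⁻¹
  · gcongr
    exact LpNorm_one_sub_div_le hq1 hLp

lemma mul_exp_mul_le_mul_exp_mul {a b C X : ℝ} (hC : 0 ≤ C) (hX : 0 ≤ X) (ha : a ≤ C)
    (hb : b ≤ C) : a * Real.exp (b * X) ≤ C * Real.exp (C * X) := by
  gcongr

theorem exists_c1Bnd_of_isPoissonBoltzmann (d : ℕ) (hα : α ∈ Ioo 0 1) {A : ℝ} (hA : 0 ≤ A) :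
    ∃ C, 0 < C ∧ ∀ (c X : ℝ) (U u : (Fin d → ℝ) → ℝ), 0 < c → c⁻¹ ≤ X → (∀ x, |U x| ≤ A * X) →
      IsPoissonBoltzmann c U u → C1Bnd α u (C * Real.exp (C * X)) := by
  obtain ⟨B, hB, hest⟩ := exists_isHolderBounded_of_isPoissonBoltzmann d hα hA
  refine ⟨2 * B + 2 * (d * B) + (2 * A + 1), by positivity, fun c X U u hc hcX hU hu => ?_⟩
  have hX : 0 ≤ X := (inv_pos.mpr hc).le.trans hcX
  obtain ⟨h0, h1⟩ := hest c X U u hc hcX hU hu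
  refine (c1Bnd_of_isHolderBounded hα.1 (by positivity) hu.zPeriodic h0 h1).mono ?_
  calc _ = (2 * B + 2 * (d * B)) * Real.exp ((2 * A + 1) * X) := by ring
    _ ≤ _ := mul_exp_mul_le_mul_exp_mul (by positivity) hX (by linarith)
      (le_add_of_nonneg_left (by positivity))

theorem exists_c2Bnd_of_isPoissonBoltzmann (d : ℕ) (hα : α ∈ Ioo 0 1) {A : ℝ} (hA : 0 ≤ A) :
    ∃ C, 0 < C ∧ ∀ (c X : ℝ) (U u : (Fin d → ℝ) → ℝ), 0 < c → c⁻¹ ≤ X →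
      IsHolderBounded α U (A * X) → IsPoissonBoltzmann c U u →
      C2Bnd α u (C * Real.exp (C * X)) := by
  obtain ⟨B₁, hB₁, hest⟩ := exists_isHolderBounded_of_isPoissonBoltzmann d hα hA
  obtain ⟨B₂, hB₂, hhess⟩ := exists_isHolderBounded_hess_of_isPoissonBoltzmann d hα hA
  set B := B₁ + B₂
  refine ⟨2 * B + 2 * (d * B) + 2 * (d * (d * B)) + 2 * (2 * A + 1), by positivity,
    fun c X U u hc hcX hU hu => ?_⟩
  have hX : 0 ≤ X := (inv_pos.mpr hc).le.trans hcX
  set E := Real.exp (2 * (2 * A + 1) * X)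
  have hB₁E : B₁ * Real.exp ((2 * A + 1) * X) ≤ B * E := by
    have hexp : Real.exp ((2 * A + 1) * X) ≤ E :=
      Real.exp_le_exp.mpr (mul_le_mul_of_nonneg_right (by linarith) hX)
    exact mul_le_mul (by linarith) hexp (by positivity) (by positivity)
  have hB₂E : B₂ * E ≤ B * E := by
    gcongr
    linarith
  obtain ⟨h0, h1⟩ := hest c X U u hc hcX hU.1 hu
  refine (c2Bnd_of_isHolderBounded hα.1 (by positivity) hu.zPeriodic (h0.mono hB₁E)
    (fun i => (h1 i).mono hB₁E) fun i j => (hhess c X U u hc hcX hU hu i j).mono hB₂E).mono ?_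
  calc _ = (2 * B + 2 * (d * B) + 2 * (d * (d * B))) * E := by ring
    _ ≤ _ := mul_exp_mul_le_mul_exp_mul (by positivity) hX (by linarith)
      (le_add_of_nonneg_left (by positivity))

lemma inv_sq_le_one_add_LpNorm_div (hε : ε ≠ 0) : (ε ^ 2)⁻¹ ≤ (1 + LpNorm q h) / ε ^ 2 := by
  rw [inv_eq_one_div]
  gcongr
  exact le_add_of_nonneg_right ENNReal.toReal_nonneg

end Potential

section Exponents

variable {d : ℕ} {α : ℝ}

lemma one_le_add_two_div (hd : 0 < d) : 1 ≤ ((d : ℝ≥0∞) + 2) / d := by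
  rw [ENNReal.le_div_iff_mul_le (.inl (by positivity)) (.inl (ENNReal.natCast_ne_top d)), one_mul]
  exact le_self_add

lemma add_two_div_ne_top (hd : 0 < d) : ((d : ℝ≥0∞) + 2) / d ≠ ⊤ :=
  ENNReal.div_ne_top (by finiteness) (by positivity)

lemma div_toReal_add_two_div (d : ℕ) :
    (d : ℝ) / (((d : ℝ≥0∞) + 2) / d).toReal = d ^ 2 / (d + 2) := by
  rw [ENNReal.toReal_div, ENNReal.toReal_add (ENNReal.natCast_ne_top d) ENNReal.ofNat_ne_top,
    ENNReal.toReal_natCast, ENNReal.toReal_ofNat, div_div_eq_mul_div, sq]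

lemma div_toReal_add_two_div_lt_two (hd : d = 2 ∨ d = 3) :
    (d : ℝ) / (((d : ℝ≥0∞) + 2) / d).toReal < 2 := by
  rw [div_toReal_add_two_div]
  rcases hd with rfl | rfl <;> norm_num

lemma le_two_sub_of_mem_Aset (hd : d = 2 ∨ d = 3) (hα : α ∈ Aset d) :
    α ≤ 2 - (d : ℝ) / (((d : ℝ≥0∞) + 2) / d).toReal := by
  rw [div_toReal_add_two_div]
  rcases hd with rfl | rfl <;> norm_num [Aset] at hα ⊢ <;> linarith

lemma mem_Ioo_of_mem_Aset (hα : α ∈ Aset d) : α ∈ Ioo 0 1 := by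
  unfold Aset at hα
  split_ifs at hα
  exacts [hα, ⟨hα.1, hα.2.trans_lt (by norm_num)⟩]

end Exponents

theorem statement3_general (d : ℕ) {α : ℝ} (hα : α ∈ Ioo 0 1) {q : ℝ≥0∞} (hq1 : 1 ≤ q)
    (hq : q ≠ ⊤) (hdq : d / q.toReal < 2) :
    ∃ C : ℝ, 0 < C ∧ ∀ ε : ℝ, ε ≠ 0 → ∀ h Ubar Uhat : (Fin d → ℝ) → ℝ,
      Measurable h → ZPeriodic h → MemLp h q (torusMeasure d) →
      ContDiff ℝ 1 Ubar → ZPeriodic Ubar → (∫ x, Ubar x ∂(torusMeasure d)) = 0 →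
      IsWeakPoisson ε Ubar (fun x => 1 - h x) →
      ContDiff ℝ 2 Uhat → ZPeriodic Uhat →
      (∀ x, ε ^ 2 * lap Uhat x = Real.exp (Ubar x + Uhat x) - 1) →
      C1Bnd α Uhat (C * Real.exp (C / ε ^ 2 * (1 + LpNorm q h))) ∧
        (α ≤ 2 - d / q.toReal →
          C2Bnd α Uhat (C * Real.exp (C / ε ^ 2 * (1 + LpNorm q h)))) := by
  have hβ : min α (2 - d / q.toReal) ∈ Ioo (0 : ℝ) 1 :=
    ⟨lt_min hα.1 (by linarith), (min_le_left _ _).trans_lt hα.2⟩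
  obtain ⟨A, hA, hpot⟩ := exists_isHolderBounded_of_isWeakPoisson d hβ hq1 hq (min_le_right _ _)
  obtain ⟨C₁, hC₁, hc1⟩ := exists_c1Bnd_of_isPoissonBoltzmann d hα hA
  obtain ⟨C₂, hC₂, hc2⟩ := exists_c2Bnd_of_isPoissonBoltzmann d hα hA
  refine ⟨C₁ + C₂, by positivity, fun ε hε h Ubar Uhat hm hper hLp hU hUper hU0 hweak hu hup heq =>
    ?_⟩
  set X := (1 + LpNorm q h) / ε ^ 2 with hXdef
  have hX : (ε ^ 2)⁻¹ ≤ X := inv_sq_le_one_add_LpNorm_div hε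
  have hX0 : 0 ≤ X := (by positivity : 0 ≤ (ε ^ 2)⁻¹).trans hX
  have hPB : IsPoissonBoltzmann (ε ^ 2) Ubar Uhat := ⟨hu, hup, heq⟩
  have hUbar := hpot ε h Ubar hε hm hper hLp hU hUper hU0 hweak
  have hrate : (C₁ + C₂) / ε ^ 2 * (1 + LpNorm q h) = (C₁ + C₂) * X := by
    rw [hXdef, div_mul_eq_mul_div, mul_div_assoc]
  rw [hrate]
  refine ⟨(hc1 _ X Ubar Uhat (by positivity) hX hUbar.1 hPB).mono ?_, fun hαq => ?_⟩
  · exact mul_exp_mul_le_mul_exp_mul (by positivity) hX0 (by linarith) (by linarith)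
  · rw [min_eq_left hαq] at hUbar
    refine (hc2 _ X Ubar Uhat (by positivity) hX hUbar hPB).mono ?_
    exact mul_exp_mul_le_mul_exp_mul (by positivity) hX0 (by linarith) (by linarith)

/-- Regularity of the smooth part `Û` of the electrostatic potential:
`C^{1,α}` and `C^{2,α}` estimates, with (iterated) exponential dependence on
`ε^{-2}(1 + ‖h‖_{L^{(d+2)/d}})`, for `Û` solving `ε² Δ Û = e^{Ū+Û} − 1`, where `Ū` is the
zero-mean weak solution of `ε² Δ Ū = 1 − h`. -/
theorem statement3 (d : ℕ) (hd : d = 2 ∨ d = 3) (α : ℝ) :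
    ∃ C : ℝ, 0 < C ∧
      ∀ ε : ℝ, 0 < ε →
      ∀ h Ubar Uhat : (Fin d → ℝ) → ℝ,
        Measurable h → ZPeriodic h → (∀ x, 0 ≤ h x) →
        (∫ x, h x ∂(torusMeasure d)) = 1 →
        MemLp h ⊤ (torusMeasure d) → MemLp h (((d : ℝ≥0∞) + 2) / d) (torusMeasure d) →
        ContDiff ℝ 1 Ubar → ZPeriodic Ubar →
        (∫ x, Ubar x ∂(torusMeasure d)) = 0 →
        IsWeakPoisson ε Ubar (fun x => 1 - h x) →
        ContDiff ℝ 2 Uhat → ZPeriodic Uhat →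
        (∀ x, ε ^ 2 * lap Uhat x = Real.exp (Ubar x + Uhat x) - 1) →
        (α ∈ Set.Ioo (0:ℝ) 1 →
          C1Bnd α Uhat
            (C * Real.exp (C / ε ^ 2 * (1 + LpNorm (((d : ℝ≥0∞) + 2) / d) h)))) ∧
        (α ∈ Aset d →
          C2Bnd α Uhat
            (C * Real.exp (Real.exp (C / ε ^ 2 *
              (1 + LpNorm (((d : ℝ≥0∞) + 2) / d) h))))) := by
  have hd0 : 0 < d := by rcases hd with rfl | rfl <;> norm_num
  by_cases hα : α ∈ Ioo 0 1
  · obtain ⟨C, hC, hbound⟩ := statement3_general d hα (one_le_add_two_div hd0)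
      (add_two_div_ne_top hd0) (div_toReal_add_two_div_lt_two hd)
    refine ⟨C, hC, fun ε hε h Ubar Uhat hm hper _ _ _ hLp hU hUper hU0 hweak hu hup heq => ?_⟩
    obtain ⟨hc1, hc2⟩ := hbound ε hε.ne' h Ubar Uhat hm hper hLp hU hUper hU0 hweak hu hup heq
    refine ⟨fun _ => hc1, fun hαA => (hc2 (le_two_sub_of_mem_Aset hd hαA)).mono ?_⟩
    gcongr
    exact (le_add_of_nonneg_right zero_le_one).trans (Real.add_one_le_exp _)
  · exact ⟨1, one_pos, fun _ _ _ _ _ _ _ _ _ _ _ _ _ _ _ _ _ _ =>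
      ⟨fun h => absurd h hα, fun h => absurd (mem_Ioo_of_mem_Aset h) hα⟩⟩
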